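/- arXiv:1407.6086 — 3 statements merged into one kernel-verified Lean document; each statement's English description precedes it below -/
import Mathlib

section
/- Let b be prime, let m ≤ n be positive integers, let p ∈ 𝔽_b[x] with deg(p) = n, and let q = (q_1,…,q_s) ∈ 𝔽_b[x]^s. Let 𝒫(q,p) = {z_0,…,z_{b^m−1}} be the associated higher order polynomial lattice point set and 𝒫^⊥(q,p) its dual polynomial lattice. Then for every k ∈ ℕ₀^s, Σ_{h=0}^{b^m−1} W_k(z_h) = b^m if k ∈ 𝒫^⊥(q,p), and Σ_{h=0}^{b^m−1} W_k(z_h) = 0 otherwise. -/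
open scoped Classical

namespace QMC

/-- the `i`-th `b`-adic digit of `k`. -/
def digit (b k i : ℕ) : ℕ := k / b ^ i % b

/-- the `k`-th character `W_k` on `G = (ℤ/bℤ)^ℕ`, where `z i = ζ_{i+1}`. -/
noncomputable def W (b k : ℕ) (z : ℕ → ZMod b) : ℂ :=
  Complex.exp (2 * Real.pi * Complex.I / b) ^
    ∑ i ∈ Finset.range (k + 1), digit b k i * (z i).val

/-- the `k`-th character on `G^s`. -/
noncomputable def Wvec (b : ℕ) {s : ℕ} (k : Fin s → ℕ) (z : Fin s → ℕ → ZMod b) : ℂ :=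
  ∏ j, W b (k j) (z j)

/-- the polynomial over `𝔽_b` whose coefficients are the `b`-adic digits of `h`. -/
noncomputable def natPoly (b h : ℕ) : Polynomial (ZMod b) :=
  ∑ i ∈ Finset.range (h + 1), Polynomial.C ((digit b h i : ℕ) : ZMod b) * Polynomial.X ^ i

/-- the truncated polynomial `tr_n(k)(x) = κ₀ + κ₁ x + ⋯ + κ_{n-1} x^{n-1}`. -/
noncomputable def trunc (b n k : ℕ) : Polynomial (ZMod b) :=
  ∑ i ∈ Finset.range n, Polynomial.C ((digit b k i : ℕ) : ZMod b) * Polynomial.X ^ i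

/-- the point `v_n(h q / p) ∈ G` of a higher order polynomial lattice point set:
its `i`-th entry (for `i < n`) is the coefficient `t_{i+1}` of `x^{-(i+1)}` in the
Laurent expansion of `h q / p` in `x^{-1}`, which is the coefficient of `x^{n-(i+1)}`
in the Euclidean quotient `(xⁿ h q) / p`; entries with `i ≥ n` are `0`. -/
noncomputable def hoPoint (b : ℕ) [Fact b.Prime] (p q : Polynomial (ZMod b)) (n h : ℕ) :
    ℕ → ZMod b := fun i =>
  if i < n then ((Polynomial.X ^ n * natPoly b h * q) / p).coeff (n - (i + 1)) else 0

/-- membership in the dual polynomial lattice `𝒫^⊥(q,p)`: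
`tr_n(k₁)q₁ + ⋯ + tr_n(k_s)q_s ≡ a (mod p)` for some `a` with `deg(a) < n - m`. -/
def inDualLattice (b : ℕ) {s : ℕ} (m n : ℕ) (p : Polynomial (ZMod b))
    (q : Fin s → Polynomial (ZMod b)) (k : Fin s → ℕ) : Prop :=
  ∃ a : Polynomial (ZMod b), a.degree < ((n - m : ℕ) : WithBot ℕ) ∧
    p ∣ (∑ j, trunc b n (k j) * q j - a)

theorem pdiv_unique (b : ℕ) [Fact b.Prime] (f p Q r : Polynomial (ZMod b)) (hp : p ≠ 0)
    (hr : r.degree < p.degree) (h : f = p * Q + r) : f / p = Q := by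
  have h1 : p * (f / p - Q) = r - f % p := by
    have h2 := EuclideanDomain.div_add_mod f p
    linear_combination h2 + h
  by_contra hne
  have h3 : f / p - Q ≠ 0 := sub_ne_zero.2 hne
  have h4 : (r - f % p).degree < p.degree :=
    (Polynomial.degree_sub_le _ _).trans_lt (max_lt hr (Polynomial.degree_mod_lt f hp))
  rw [← h1] at h4
  exact absurd (Polynomial.degree_le_mul_left p h3) (not_le.2 h4)

theorem padd_div (b : ℕ) [Fact b.Prime] (f g p : Polynomial (ZMod b)) :
    (f + g) / p = f / p + g / p := by
  by_cases hp : p = 0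
  · simp [hp]
  refine pdiv_unique b _ p _ (f % p + g % p) hp ?_ ?_
  · exact (Polynomial.degree_add_le _ _).trans_lt
      (max_lt (Polynomial.degree_mod_lt f hp) (Polynomial.degree_mod_lt g hp))
  · have h1 := EuclideanDomain.div_add_mod f p
    have h2 := EuclideanDomain.div_add_mod g p
    linear_combination -h1 - h2

theorem psmul_div (b : ℕ) [Fact b.Prime] (c : ZMod b) (f p : Polynomial (ZMod b)) :
    (c • f) / p = c • (f / p) := by
  by_cases hp : p = 0
  · simp [hp]
  refine pdiv_unique b _ p _ (c • (f % p)) hp ?_ ?_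
  · exact (Polynomial.degree_smul_le _ _).trans_lt (Polynomial.degree_mod_lt f hp)
  · conv_lhs => rw [← EuclideanDomain.div_add_mod f p]
    rw [smul_add, mul_smul_comm]

theorem char_sum_eq_prod {b : ℕ} [Fact b.Prime] {ι : Type*} (ψ : AddChar (ZMod b) ℂ)
    (t : Finset ι) (f : ι → ZMod b) : ψ (∑ i ∈ t, f i) = ∏ i ∈ t, ψ (f i) := by
  induction t using Finset.induction_on with
  | empty => simp
  | insert a t ha ih => rw [Finset.sum_insert ha, Finset.prod_insert ha, AddChar.map_add_eq_mul, ih]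

open Polynomial in
/-- the coefficient of `x^{-1}` in `f/p`, as a linear functional -/
noncomputable def resL (b : ℕ) [Fact b.Prime] (p : Polynomial (ZMod b)) :
    Polynomial (ZMod b) →+ ZMod b where
  toFun f := ((X * f) / p).coeff 0
  map_zero' := by simp
  map_add' f g := by
    rw [mul_add, padd_div, Polynomial.coeff_add]

open Polynomial in
theorem resL_apply (b : ℕ) [Fact b.Prime] (p f : Polynomial (ZMod b)) :
    resL b p f = ((X * f) / p).coeff 0 := rfl

open Polynomial in
theorem resL_C_mul (b : ℕ) [Fact b.Prime] (p f : Polynomial (ZMod b)) (c : ZMod b) :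
    resL b p (C c * f) = c * resL b p f := by
  have h : X * (C c * f) = c • (X * f) := by rw [Polynomial.smul_eq_C_mul]; ring
  rw [resL_apply, resL_apply, h, psmul_div, Polynomial.coeff_smul, smul_eq_mul]

open Polynomial in
theorem resL_mul_self (b : ℕ) [Fact b.Prime] (p f : Polynomial (ZMod b)) (hp : p ≠ 0) :
    resL b p (p * f) = 0 := by
  have h : X * (p * f) = p * (X * f) := by ring
  rw [resL_apply, h, mul_div_cancel_left₀ _ hp]
  simp

open Polynomial in
theorem coeff_div_shift (b : ℕ) [Fact b.Prime] (p u : Polynomial (ZMod b)) (hp : p ≠ 0) (a : ℕ) :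
    ((X ^ a * u) / p).coeff a = (u / p).coeff 0 := by
  have h : X ^ a * u = p * (X ^ a * (u / p)) + X ^ a * (u % p) := by
    conv_lhs => rw [← EuclideanDomain.div_add_mod u p]
    ring
  rw [h, padd_div, mul_div_cancel_left₀ _ hp, Polynomial.coeff_add]
  have h1 : ((X ^ a * (u % p)) / p).coeff a = 0 := by
    by_cases hr : u % p = 0
    · simp [hr]
    by_cases hd : (X ^ a * (u % p)).degree < p.degree
    · rw [(Polynomial.div_eq_zero_iff hp).2 hd]; simp
    · apply Polynomial.coeff_eq_zero_of_degree_lt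
      have h2 := Polynomial.degree_add_div hp (not_lt.1 hd)
      have h3 : (u % p).degree < p.degree := Polynomial.degree_mod_lt u hp
      rw [Polynomial.degree_mul, Polynomial.degree_X_pow] at h2
      by_contra hcon
      rw [not_lt] at hcon
      rw [Polynomial.degree_eq_natDegree hr] at h2 h3
      rw [Polynomial.degree_eq_natDegree hp] at h2 h3
      have h4 : (X ^ a * (u % p)) / p ≠ 0 := by
        rintro h0
        rw [h0] at hcon
        simp at hcon
      rw [Polynomial.degree_eq_natDegree h4] at h2 hcon
      norm_cast at h2 h3 hcon
      omega
  rw [h1, add_zero]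
  simpa using Polynomial.coeff_X_pow_mul (u / p) a 0

open Polynomial in
theorem hoPoint_eq (b : ℕ) [Fact b.Prime] (p q : Polynomial (ZMod b)) (hp : p ≠ 0) (n h i : ℕ)
    (hi : i < n) : hoPoint b p q n h i = resL b p (X ^ i * (natPoly b h * q)) := by
  have h1 : X ^ n * natPoly b h * q = X ^ (n - (i + 1)) * (X * (X ^ i * (natPoly b h * q))) := by
    have : n = (n - (i + 1)) + 1 + i := by omega
    conv_lhs => rw [this]
    ring
  rw [hoPoint, if_pos hi, h1, coeff_div_shift b p _ hp, resL_apply]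

theorem digit_eq_zero (b : ℕ) [Fact b.Prime] (k i : ℕ) (h : k < b ^ i) : digit b k i = 0 := by
  rw [digit, Nat.div_eq_of_lt h, Nat.zero_mod]

theorem lt_pow_prime (b : ℕ) [Fact b.Prime] (k : ℕ) : k < b ^ k :=
  Nat.lt_pow_self (Fact.out : b.Prime).one_lt

theorem sum_digit_ext (b : ℕ) [Fact b.Prime] {M : Type*} [AddCommMonoid M] (k N N' : ℕ)
    (f : ℕ → M) (h0 : ∀ i, digit b k i = 0 → f i = 0) (hN : k < b ^ N) (hN' : k < b ^ N') :
    ∑ i ∈ Finset.range N, f i = ∑ i ∈ Finset.range N', f i := by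
  have key : ∀ N N', N ≤ N' → k < b ^ N →
      ∑ i ∈ Finset.range N, f i = ∑ i ∈ Finset.range N', f i := by
    intro N N' hle h
    apply Finset.sum_subset (Finset.range_subset_range.2 hle)
    intro i _ hi
    rw [Finset.mem_range, not_lt] at hi
    exact h0 i (digit_eq_zero b k i
      (h.trans_le (Nat.pow_le_pow_right (Fact.out : b.Prime).pos hi)))
  rcases le_total N N' with h | h
  · exact key _ _ h hN
  · exact (key _ _ h hN').symm

theorem W_eq (b : ℕ) [Fact b.Prime] (k : ℕ) (z : ℕ → ZMod b) :
    W b k z = ZMod.stdAddChar (∑ i ∈ Finset.range (k + 1), (digit b k i : ZMod b) * z i) := by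
  have h : (∑ i ∈ Finset.range (k + 1), (digit b k i : ZMod b) * z i) =
      (((∑ i ∈ Finset.range (k + 1), digit b k i * (z i).val : ℕ) : ℤ) : ZMod b) := by
    push_cast
    simp
  rw [h, ZMod.stdAddChar_coe, W, ← Complex.exp_nat_mul]
  congr 1
  push_cast
  ring

open Polynomial in
theorem W_hoPoint (b : ℕ) [Fact b.Prime] (p q : Polynomial (ZMod b)) (hp : p ≠ 0) (n h k : ℕ) :
    W b k (hoPoint b p q n h) =
      ZMod.stdAddChar (resL b p (natPoly b h * (trunc b n k * q))) := by
  rw [W_eq]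
  congr 1
  have h1 : natPoly b h * (trunc b n k * q) =
      ∑ i ∈ Finset.range n, C (digit b k i : ZMod b) * (X ^ i * (natPoly b h * q)) := by
    rw [trunc, Finset.sum_mul, Finset.mul_sum]
    exact Finset.sum_congr rfl fun i _ => by ring
  have h2 : resL b p (natPoly b h * (trunc b n k * q)) =
      ∑ i ∈ Finset.range n, (digit b k i : ZMod b) * hoPoint b p q n h i := by
    rw [h1, map_sum]
    refine Finset.sum_congr rfl fun i hi => ?_
    rw [resL_C_mul, hoPoint_eq b p q hp n h i (Finset.mem_range.1 hi)]
  rw [h2]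
  have hk : k < b ^ (k + 1) :=
    (lt_pow_prime b k).trans_le (Nat.pow_le_pow_right (Fact.out : b.Prime).pos (by omega))
  have hk' : k < b ^ (k + n) :=
    (lt_pow_prime b k).trans_le (Nat.pow_le_pow_right (Fact.out : b.Prime).pos (by omega))
  rw [sum_digit_ext b k (k + 1) (k + n) _ (fun i hi => by simp [hi]) hk hk']
  symm
  apply Finset.sum_subset (Finset.range_subset_range.2 (by omega))
  intro i _ hi
  rw [Finset.mem_range] at hi
  rw [hoPoint, if_neg hi, mul_zero]

open Polynomial in
theorem natPoly_eq (b : ℕ) [Fact b.Prime] (m h : ℕ) (hh : h < b ^ m) :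
    natPoly b h = ∑ i ∈ Finset.range m, C (digit b h i : ZMod b) * X ^ i :=
  sum_digit_ext b h _ _ _ (fun i hi => by simp [hi])
    ((lt_pow_prime b h).trans_le (Nat.pow_le_pow_right (Fact.out : b.Prime).pos (by omega))) hh

theorem sum_digits_prod (b m : ℕ) [Fact b.Prime] (f : ℕ → ZMod b → ℂ) :
    ∑ h ∈ Finset.range (b ^ m), ∏ i ∈ Finset.range m, f i (digit b h i : ZMod b) =
      ∏ i ∈ Finset.range m, ∑ d : ZMod b, f i d := by
  have hd : ∀ i, ∑ d : ZMod b, f i d = ∑ d : Fin b, f i ((d : ℕ) : ZMod b) := by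
    intro i
    symm
    refine Fintype.sum_bijective (fun d : Fin b => ((d : ℕ) : ZMod b)) ?_ _ _ (fun _ => rfl)
    rw [Fintype.bijective_iff_injective_and_card]
    refine ⟨fun x y hxy => ?_, by simp [ZMod.card]⟩
    have := (ZMod.natCast_eq_natCast_iff' _ _ _).1 hxy
    rw [Nat.mod_eq_of_lt x.2, Nat.mod_eq_of_lt y.2] at this
    exact Fin.ext this
  simp_rw [hd]
  rw [Finset.prod_range, Finset.prod_univ_sum, Finset.sum_range, Fintype.piFinset_univ]
  refine Fintype.sum_equiv finFunctionFinEquiv.symm _ _ fun h => ?_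
  rw [Finset.prod_range]
  rfl

open Polynomial in
theorem dual_iff (b m n : ℕ) [Fact b.Prime] (hmn : m ≤ n) (p T : Polynomial (ZMod b))
    (hp : p.degree = (n : WithBot ℕ)) (hp0 : p ≠ 0) :
    (∃ a : Polynomial (ZMod b), a.degree < ((n - m : ℕ) : WithBot ℕ) ∧ p ∣ (T - a)) ↔
      ∀ i ∈ Finset.range m, resL b p (X ^ i * T) = 0 := by
  constructor
  · rintro ⟨a, ha, c, hc⟩ i hi
    rw [Finset.mem_range] at hi
    have h1 : X ^ i * T = p * (X ^ i * c) + X ^ i * a := by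
      rw [sub_eq_iff_eq_add.1 hc]; ring
    rw [h1, map_add, resL_mul_self b p _ hp0, zero_add, resL_apply]
    by_cases ha0 : a = 0
    · simp [ha0]
    rw [(Polynomial.div_eq_zero_iff hp0).2, Polynomial.coeff_zero]
    rw [hp, Polynomial.degree_mul, Polynomial.degree_mul, Polynomial.degree_X_pow,
      Polynomial.degree_X, Polynomial.degree_eq_natDegree ha0]
    rw [Polynomial.degree_eq_natDegree ha0] at ha
    norm_cast at ha ⊢
    omega
  · intro H
    refine ⟨T % p, ?_, ?_⟩
    swap
    · exact ⟨T / p, by rw [sub_eq_iff_eq_add, EuclideanDomain.div_add_mod]⟩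
    by_contra hcon
    rw [not_lt] at hcon
    have hlt : (T % p).degree < p.degree := Polynomial.degree_mod_lt T hp0
    have ha0 : T % p ≠ 0 := by
      intro h0
      rw [h0] at hcon
      simp at hcon
    rw [hp] at hlt
    rw [Polynomial.degree_eq_natDegree ha0] at hcon hlt
    norm_cast at hcon hlt
    set d := (T % p).natDegree with hd
    have h0 := H (n - 1 - d) (Finset.mem_range.2 (by omega))
    have h1 : X ^ (n - 1 - d) * T =
        p * (X ^ (n - 1 - d) * (T / p)) + X ^ (n - 1 - d) * (T % p) := by
      conv_lhs => rw [← EuclideanDomain.div_add_mod T p]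
      ring
    rw [h1, map_add, resL_mul_self b p _ hp0, zero_add, resL_apply] at h0
    have hdeg : (X * (X ^ (n - 1 - d) * (T % p))).degree = p.degree := by
      rw [hp, Polynomial.degree_mul, Polynomial.degree_mul, Polynomial.degree_X_pow,
        Polynomial.degree_X, Polynomial.degree_eq_natDegree ha0, ← hd]
      norm_cast
      omega
    have h2 := Polynomial.degree_add_div hp0 hdeg.ge
    have h4 : (X * (X ^ (n - 1 - d) * (T % p))) / p ≠ 0 := by
      rw [Ne, Polynomial.div_eq_zero_iff hp0, hdeg]
      exact lt_irrefl _
    rw [hdeg, hp, Polynomial.degree_eq_natDegree h4] at h2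
    norm_cast at h2
    have h5 : ((X * (X ^ (n - 1 - d) * (T % p))) / p).natDegree = 0 := by omega
    apply h4
    rw [Polynomial.eq_C_of_natDegree_eq_zero h5, h0, Polynomial.C_0]

/-- The character sum over a higher order polynomial lattice point set is `b^m` on the
dual polynomial lattice and `0` off it. -/
theorem sum_char_hoplps (b s m n : ℕ) [Fact b.Prime] (hs : 0 < s) (hm : 0 < m)
    (hmn : m ≤ n) (p : Polynomial (ZMod b)) (hp : p.degree = (n : WithBot ℕ))
    (q : Fin s → Polynomial (ZMod b)) (k : Fin s → ℕ) :
    ∑ h ∈ Finset.range (b ^ m), Wvec b k (fun j => hoPoint b p (q j) n h) =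
      if inDualLattice b m n p q k then ((b : ℂ) ^ m) else 0 := by
  have hp0 : p ≠ 0 := by
    rintro rfl
    simp at hp
  set T := ∑ j, trunc b n (k j) * q j with hT
  have h1 : ∀ h ∈ Finset.range (b ^ m), Wvec b k (fun j => hoPoint b p (q j) n h) =
      ∏ i ∈ Finset.range m, ZMod.stdAddChar
        ((digit b h i : ZMod b) * resL b p (Polynomial.X ^ i * T)) := by
    intro h hh
    rw [Wvec]
    simp_rw [W_hoPoint b p _ hp0]
    rw [← char_sum_eq_prod, ← map_sum, ← Finset.mul_sum, ← hT,
      natPoly_eq b m h (Finset.mem_range.1 hh), Finset.sum_mul, map_sum,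
      char_sum_eq_prod]
    refine Finset.prod_congr rfl fun i _ => ?_
    rw [mul_assoc, resL_C_mul]
  rw [Finset.sum_congr rfl h1, sum_digits_prod b m
    (fun i d => ZMod.stdAddChar (d * resL b p (Polynomial.X ^ i * T)))]
  have h2 : ∀ i ∈ Finset.range m,
      ∑ d : ZMod b, (ZMod.stdAddChar (d * resL b p (Polynomial.X ^ i * T)) : ℂ) =
        if resL b p (Polynomial.X ^ i * T) = 0 then (b : ℂ) else 0 := by
    intro i _
    rw [AddChar.sum_mulShift _ (ZMod.isPrimitive_stdAddChar b), ZMod.card]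
    split_ifs <;> simp
  rw [Finset.prod_congr rfl h2]
  have h3 := dual_iff b m n hmn p T hp hp0
  by_cases hD : inDualLattice b m n p q k
  · rw [if_pos hD, Finset.prod_congr rfl (fun i hi => if_pos (h3.1 hD i hi))]
    simp
  · rw [if_neg hD]
    have h4 : ¬ ∀ i ∈ Finset.range m, resL b p (Polynomial.X ^ i * T) = 0 :=
      fun hh => hD (h3.2 hh)
    push Not at h4
    obtain ⟨i, hi, hne⟩ := h4
    exact Finset.prod_eq_zero hi (if_neg hne)

end QMC
end

section
/- Let T = (t_{i,j})_{i,j∈ℕ} be the matrix over ℤ/bℤ with t_{i,1} = b−1, t_{i,i+1} = 1, and t_{i,j} = 0 otherwise. Then for every matrix C over ℤ/bℤ with countably many rows and m columns and every v ∈ (ℤ/bℤ)^m, one has Φ_b(C v) = (T C) v. Consequently, if 𝒫 is the digital net in G^s with generating matrices C_1,…,C_s, then its folded digital net 𝒫_{Φ_b} coincides with the digital net in G^s with generating matrices T C_1,…,T C_s. -/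
namespace QMC

/-- the `b`-adic tent transformation `Φ_b : G → G`, `(Φ_b z) i = ζ_{i+2} - ζ_1`
(here `z i = ζ_{i+1}`). -/
def tent (b : ℕ) (z : ℕ → ZMod b) : ℕ → ZMod b := fun i => z (i + 1) - z 0

/-- the matrix `T` with `t_{i,1} = b-1`, `t_{i,i+1} = 1` and `t_{i,j} = 0` otherwise
(rows and columns indexed by `ℕ` starting from `0`). -/
def Tmat (b : ℕ) (i j : ℕ) : ZMod b :=
  if j = 0 then ((b - 1 : ℕ) : ZMod b) else if j = i + 1 then 1 else 0

/-- the matrix product `T · C` for a matrix `C` with countably many rows and `m`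
columns (the sum over `j` has finite support). -/
noncomputable def TmulC (b : ℕ) {m : ℕ} (C : ℕ → Fin m → ZMod b) : ℕ → Fin m → ZMod b :=
  fun i c => ∑ᶠ j : ℕ, Tmat b i j * C j c

/-- the point `z_h = (C₁ h⃗, …, C_s h⃗)` of the digital net with generating matrices `C`. -/
def netPoint (b : ℕ) {s m : ℕ} (C : Fin s → ℕ → Fin m → ZMod b) (h : ℕ) :
    Fin s → ℕ → ZMod b :=
  fun j i => ∑ c, C j i c * (digit b h c : ZMod b)

theorem TmulC_apply (b : ℕ) (hb : 2 ≤ b) {m : ℕ} (C : ℕ → Fin m → ZMod b) (i : ℕ) (c : Fin m) :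
    TmulC b C i c = C (i + 1) c - C 0 c := by
  unfold TmulC
  rw [finsum_eq_sum_of_support_subset (s := {0, i + 1})]
  · rw [Finset.sum_pair (by omega)]
    have h1 : ((b - 1 : ℕ) : ZMod b) = -1 := by
      rw [Nat.cast_sub (by omega)]
      simp
    simp [Tmat, h1]
    ring
  · intro j hj
    by_contra hne
    simp only [Finset.coe_insert, Finset.coe_singleton, Set.mem_insert_iff,
      Set.mem_singleton_iff, not_or] at hne
    apply hj
    simp [Tmat, hne.1, hne.2]

/-- Folding by the tent transformation is given by multiplication by the matrix `T`:
`Φ_b(C v) = (T C) v`, and consequently the folded digital net coincides with the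
digital net generated by the matrices `T C₁, …, T C_s`. -/
theorem tent_eq_Tmat_mulVec (b : ℕ) (hb : 2 ≤ b) (s m : ℕ) (hs : 0 < s) (hm : 0 < m) :
    (∀ (C : ℕ → Fin m → ZMod b) (v : Fin m → ZMod b),
      tent b (fun i => ∑ c, C i c * v c) = fun i => ∑ c, TmulC b C i c * v c) ∧
    ∀ C : Fin s → ℕ → Fin m → ZMod b,
      (fun z : Fin s → ℕ → ZMod b => fun j => tent b (z j)) ''
          {z | ∃ h < b ^ m, z = netPoint b C h} =
        {z | ∃ h < b ^ m, z = netPoint b (fun j => TmulC b (C j)) h} := by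
  have key : ∀ (C : ℕ → Fin m → ZMod b) (v : Fin m → ZMod b),
      tent b (fun i => ∑ c, C i c * v c) = fun i => ∑ c, TmulC b C i c * v c := by
    intro C v
    funext i
    simp only [tent, TmulC_apply b hb, sub_mul, Finset.sum_sub_distrib]
  refine ⟨key, fun C => ?_⟩
  have hp : ∀ h, (fun j => tent b (netPoint b C h j)) =
      netPoint b (fun j => TmulC b (C j)) h := by
    intro h
    funext j
    exact key (C j) _
  ext z
  constructor
  · rintro ⟨_, ⟨h, hh, rfl⟩, rfl⟩
    exact ⟨h, hh, hp h⟩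
  · rintro ⟨h, hh, rfl⟩
    exact ⟨_, ⟨h, hh, rfl⟩, hp h⟩

end QMC
end

section
/- Let b be prime, α ≥ 2 an integer, m ≤ n positive integers, p ∈ 𝔽_b[x] irreducible with deg(p) = n, γ_1,…,γ_s ≥ 0 weights and D > 0 a constant. Suppose q_1,…,q_s ∈ R_{b,n} are chosen component-by-component: for each τ = 1,…,s, q_τ minimizes the map q̃ ↦ B_α((q_1,…,q_{τ−1}, q̃), p) over q̃ ∈ R_{b,n}. Then for every 1 ≤ τ ≤ s and every real λ with 1/α < λ ≤ 1, B_α((q_1,…,q_τ), p) ≤ b^{−min(m/λ, 2n)} [ −1 + ∏_{j=1}^{τ} (1 + γ_j^{λ/2} D^{λ/2} A_{α,b,λ}) ]^{1/λ}, where A_{α,b,λ} = A₁ + A₂ with A₁ = (b/(b−1)) [ Σ_{v=1}^{α−1} ∏_{i=1}^{v} (b−1)/(b^{λi}−1) + ((b^{λα}−1)/(b^{λα}−b)) ∏_{i=1}^{α} (b−1)/(b^{λi}−1) ] and A₂ = (1/(b−1)) Σ_{v=2}^{α−1} ∏_{i=1}^{v} (b^{λ}(b−1))/(b^{λi}−1)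 + (b^{λ}/(b^{λα}−b)) ∏_{i=1}^{α−1} (b^{λ}(b−1))/(b^{λi}−1). -/
namespace QMC

/-- `μ_α(k) = a₁ + ⋯ + a_{min(v,α)}`, the sum of the `α` largest positions (counted
from `1`) of nonzero `b`-adic digits of `k`; `μ_α(0) = 0`. -/
def mualpha (b α k : ℕ) : ℕ :=
  (((((Finset.range (k + 1)).filter fun i => digit b k i ≠ 0).sort (· ≤ ·)).reverse.take
    α).map (· + 1)).sum

/-- the set `E` of positive integers whose `b`-adic digit sum is divisible by `b`. -/
def Eset (b : ℕ) : Set ℕ := {k | k ≠ 0 ∧ (b : ℕ) ∣ (Nat.digits b k).sum}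

/-- the quality criterion `B_α((q_1,…,q_τ), p)` (a bound on the squared worst-case
error of the folded higher order polynomial lattice rule). -/
noncomputable def Bcrit (b α m n : ℕ) [Fact b.Prime] (γ : ℕ → ℝ) (D : ℝ)
    (p : Polynomial (ZMod b)) (τ : ℕ) (q : ℕ → Polynomial (ZMod b)) : ℝ :=
  ∑ u ∈ (Finset.range τ).powerset.filter (fun u => u.Nonempty),
    Real.sqrt (∏ j ∈ u, γ j) * Real.sqrt D ^ u.card *
      ∑' f : {f : ℕ → ℕ // (∀ j ∈ u, f j ∈ Eset b) ∧ (∀ j ∉ u, f j = 0) ∧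
          ((∑ j ∈ Finset.range τ, trunc b n (f j) * q j) % p).degree <
            ((n - m : ℕ) : WithBot ℕ)},
        ((b : ℝ) ^ ∑ j ∈ u, mualpha b α (f.1 j / b))⁻¹

/-- the constant `A_{α,b,λ,1}`. -/
noncomputable def A1 (b α : ℕ) (lam : ℝ) : ℝ :=
  ((b : ℝ) / ((b : ℝ) - 1)) *
    (∑ v ∈ Finset.Icc 1 (α - 1), ∏ i ∈ Finset.Icc 1 v,
        ((b : ℝ) - 1) / ((b : ℝ) ^ (lam * i) - 1) +
      (((b : ℝ) ^ (lam * α) - 1) / ((b : ℝ) ^ (lam * α) - b)) *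
        ∏ i ∈ Finset.Icc 1 α, ((b : ℝ) - 1) / ((b : ℝ) ^ (lam * i) - 1))

/-- the constant `A_{α,b,λ,2}`. -/
noncomputable def A2 (b α : ℕ) (lam : ℝ) : ℝ :=
  (1 / ((b : ℝ) - 1)) * ∑ v ∈ Finset.Icc 2 (α - 1), ∏ i ∈ Finset.Icc 1 v,
      ((b : ℝ) ^ lam * ((b : ℝ) - 1)) / ((b : ℝ) ^ (lam * i) - 1) +
    ((b : ℝ) ^ lam / ((b : ℝ) ^ (lam * α) - b)) *
      ∏ i ∈ Finset.Icc 1 (α - 1), ((b : ℝ) ^ lam * ((b : ℝ) - 1)) / ((b : ℝ) ^ (lam * i) - 1)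

set_option linter.unusedVariables false

/-- the set of positions of nonzero digits -/
def nzset (b k : ℕ) : Finset ℕ := (Finset.range (k + 1)).filter fun i => digit b k i ≠ 0

def cnt (b k : ℕ) : ℕ := (nzset b k).card

def ds (b k : ℕ) : ℕ := (Nat.digits b k).sum

lemma digit_zero (b k : ℕ) : digit b k 0 = k % b := by simp [digit]

lemma digit_succ (b k i : ℕ) : digit b k (i + 1) = digit b (k / b) i := by
  simp [digit, pow_succ', Nat.div_div_eq_div_mul]

lemma mem_nzset {b : ℕ} (hb : 2 ≤ b) (k i : ℕ) : i ∈ nzset b k ↔ digit b k i ≠ 0 := by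
  simp only [nzset, Finset.mem_filter, Finset.mem_range, and_iff_right_iff_imp]
  intro h
  by_contra hlt
  apply h
  have h1 : k < b ^ i := lt_of_lt_of_le (by omega : k < i) (Nat.lt_pow_self hb).le
  simp [digit, Nat.div_eq_of_lt h1]

lemma nzset_eq {b : ℕ} (hb : 2 ≤ b) (k : ℕ) :
    nzset b k = (if k % b ≠ 0 then {0} else ∅) ∪ (nzset b (k / b)).map ⟨Nat.succ, Nat.succ_injective⟩ := by
  ext i
  rw [mem_nzset hb, Finset.mem_union]
  cases i with
  | zero =>
    rw [digit_zero]
    by_cases h : k % b = 0 <;> simp [h]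
  | succ i =>
    rw [digit_succ, ← mem_nzset hb]
    by_cases h : k % b = 0 <;> simp [h]

lemma sort_nzset {b : ℕ} (hb : 2 ≤ b) (k : ℕ) :
    (nzset b k).sort (· ≤ ·) = (if k % b ≠ 0 then [0] else []) ++
      ((nzset b (k / b)).sort (· ≤ ·)).map Nat.succ := by
  have hnd : ((if k % b ≠ 0 then [0] else []) ++
      ((nzset b (k / b)).sort (· ≤ ·)).map Nat.succ).Nodup := by
    have := (Finset.sort_nodup (nzset b (k/b)) (· ≤ ·)).map Nat.succ_injective
    split_ifs <;> simp_all
  apply List.Perm.eq_of_pairwise (le := (· ≤ ·))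
  · intro a c _ _ h1 h2; exact le_antisymm h1 h2
  · exact Finset.pairwise_sort _ _
  · have : (((nzset b (k / b)).sort (· ≤ ·)).map Nat.succ).Pairwise (· ≤ ·) := by
      rw [List.pairwise_map]
      exact (Finset.pairwise_sort (nzset b (k/b)) (· ≤ ·)).imp (fun h => Nat.succ_le_succ h)
    split_ifs <;> simp_all
  · rw [List.perm_ext_iff_of_nodup (Finset.sort_nodup _ _) hnd]
    intro a
    rw [Finset.mem_sort, nzset_eq hb]
    by_cases h : k % b = 0 <;> simp [h]

lemma cnt_eq {b : ℕ} (hb : 2 ≤ b) (k : ℕ) :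
    cnt b k = cnt b (k / b) + if k % b ≠ 0 then 1 else 0 := by
  have := congrArg List.length (sort_nzset hb k)
  simp only [Finset.length_sort, List.length_append, List.length_map] at this
  rw [cnt, this, cnt]
  split_ifs <;> simp; omega

lemma mu_eq {b : ℕ} (hb : 2 ≤ b) (α k : ℕ) :
    mualpha b α k = mualpha b α (k / b) + min (cnt b k) α := by
  have h1 : ∀ l : List ℕ, ((l.map Nat.succ).map (· + 1)).sum = (l.map (· + 1)).sum + l.length := by
    intro l
    induction l with
    | nil => simp
    | cons a l ih => simp only [List.map_cons, List.sum_cons, List.length_cons, ih]; omega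
  have h2 : ((nzset b (k/b)).sort (· ≤ ·)).reverse.length = cnt b (k/b) := by
    simp [cnt]
  rw [cnt_eq hb]
  change (((((nzset b k).sort (· ≤ ·)).reverse.take α).map (· + 1)).sum) =
    (((((nzset b (k/b)).sort (· ≤ ·)).reverse.take α).map (· + 1)).sum) + _
  rw [sort_nzset hb, List.reverse_append, ← List.map_reverse, List.take_append, ← List.map_take,
    List.map_append, List.sum_append, h1, List.length_map, List.length_take, h2]
  split_ifs with h
  · rcases Nat.lt_or_ge (cnt b (k/b)) α with h3 | h3
    · obtain ⟨d, hd⟩ : ∃ d, α - cnt b (k/b) = d + 1 := ⟨α - cnt b (k/b) - 1, by omega⟩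
      simp [hd]; omega
    · simp [Nat.sub_eq_zero_of_le h3]; omega
  · simp; omega

lemma ds_eq {b : ℕ} (hb : 2 ≤ b) (k : ℕ) : ds b k = k % b + ds b (k / b) := by
  rcases Nat.eq_zero_or_pos k with rfl | h
  · simp [ds]
  · rw [ds, Nat.digits_def' (by omega) h]; simp [ds]

lemma cnt_zero (b : ℕ) : cnt b 0 = 0 := by simp [cnt, nzset, digit]
lemma mu_zero (b α : ℕ) : mualpha b α 0 = 0 := by
  simp [mualpha, digit]
lemma ds_zero (b : ℕ) : ds b 0 = 0 := by simp [ds]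

lemma cnt_pos {b : ℕ} (hb : 2 ≤ b) (k : ℕ) (hk : k ≠ 0) : 1 ≤ cnt b k := by
  induction k using Nat.strong_induction_on with
  | _ k ih =>
    rw [cnt_eq hb]
    split_ifs with h
    · omega
    · have h0 : k / b ≠ 0 := by
        intro h0
        have := Nat.div_add_mod k b
        rw [h0] at this; simp at h; simp [h] at this; omega
      have := ih (k / b) (Nat.div_lt_self (by omega) hb) h0
      omega

lemma cnt_two {b : ℕ} (hb : 2 ≤ b) (k : ℕ) (hk : k ≠ 0) (hd : b ∣ ds b k) : 2 ≤ cnt b k := by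
  induction k using Nat.strong_induction_on with
  | _ k ih =>
    rw [cnt_eq hb]
    rw [ds_eq hb] at hd
    split_ifs with h
    · have : k / b ≠ 0 := by
        intro h0
        rw [h0, ds_zero, add_zero] at hd
        exact h (Nat.eq_zero_of_dvd_of_lt hd (Nat.mod_lt _ (by omega)))
      have := cnt_pos hb _ this
      omega
    · simp only [ne_eq, not_not] at h
      have h0 : k / b ≠ 0 := by
        intro h0
        have := Nat.div_add_mod k b
        rw [h0] at this; simp [h] at this; omega
      rw [h, zero_add] at hd
      have := ih (k / b) (Nat.div_lt_self (by omega) hb) h0 hd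
      omega

lemma shift {b : ℕ} (hb : 2 ≤ b) (α l r : ℕ) :
    mualpha b α (b ^ r * l) = mualpha b α l + r * min (cnt b l) α ∧ ds b (b ^ r * l) = ds b l ∧
      cnt b (b ^ r * l) = cnt b l := by
  induction r with
  | zero => simp
  | succ r ih =>
    have h1 : b ^ (r + 1) * l / b = b ^ r * l := by
      rw [pow_succ', mul_assoc, Nat.mul_div_cancel_left _ (by omega)]
    have h2 : b ^ (r + 1) * l % b = 0 := by
      rw [pow_succ', mul_assoc, Nat.mul_mod_right]
    have h3 : cnt b (b ^ (r + 1) * l) = cnt b l := by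
      rw [cnt_eq hb, h1, h2, ih.2.2]; simp
    refine ⟨?_, ?_, h3⟩
    · rw [mu_eq hb, h1, h3, ih.1]; ring
    · rw [ds_eq hb, h1, h2, ih.2.1, zero_add]

/-- bound for the sum over the class of `k` with `min (cnt k) α = v` -/
noncomputable def beta (b α : ℕ) (z : ℝ) : ℕ → ℝ
  | 0 => 1
  | v + 1 => beta b α z v * (((b : ℝ) - 1) * z ^ (v + 1) /
      (1 - (if v + 1 = α then (b : ℝ) else 1) * z ^ (v + 1)))

noncomputable def ft (b α : ℕ) (z : ℝ) (v k : ℕ) : ℝ :=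
  if min (cnt b k) α = v then z ^ mualpha b α k else 0

open Classical in
noncomputable def ht (b α : ℕ) (z : ℝ) (v k : ℕ) : ℝ :=
  if min (cnt b k) α = v ∧ b ∣ ds b k then z ^ mualpha b α k else 0

lemma sum_range_mul' (b : ℕ) (f : ℕ → ℝ) (M : ℕ) :
    ∑ i ∈ Finset.range (b * M), f i = ∑ k ∈ Finset.range M, ∑ c ∈ Finset.range b, f (b * k + c) := by
  induction M with
  | zero => simp
  | succ M ih => rw [Nat.mul_succ, Finset.sum_range_add, ih, Finset.sum_range_succ]

lemma den_pos {b α : ℕ} (hb : 2 ≤ b) (hα : 2 ≤ α) {z : ℝ} (hz0 : 0 < z) (hz1 : z < 1)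
    (hbz : (b : ℝ) * z ^ α < 1) (v : ℕ) : 0 < 1 - (if v + 1 = α then (b : ℝ) else 1) * z ^ (v + 1) := by
  split_ifs with h
  · rw [h]; linarith
  · have := pow_lt_one₀ hz0.le hz1 (show v + 1 ≠ 0 by omega)
    rw [one_mul]; linarith

lemma beta_nonneg {b α : ℕ} (hb : 2 ≤ b) (hα : 2 ≤ α) {z : ℝ} (hz0 : 0 < z) (hz1 : z < 1)
    (hbz : (b : ℝ) * z ^ α < 1) (v : ℕ) : 0 ≤ beta b α z v := by
  induction v with
  | zero => simp [beta]
  | succ v ih =>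
    have := den_pos hb hα hz0 hz1 hbz v
    have hb' : (2:ℝ) ≤ b := by exact_mod_cast hb
    have : 0 ≤ ((b:ℝ) - 1) := by linarith
    rw [beta]
    positivity

lemma beta_rec {b α : ℕ} (hb : 2 ≤ b) (hα : 2 ≤ α) {z : ℝ} (hz0 : 0 < z) (hz1 : z < 1)
    (hbz : (b : ℝ) * z ^ α < 1) (v : ℕ) : beta b α z (v + 1) =
    z ^ (v + 1) * ((if v + 1 = α then (b : ℝ) else 1) * beta b α z (v + 1) +
      ((b : ℝ) - 1) * beta b α z v) := by
  have h := den_pos hb hα hz0 hz1 hbz v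
  have : beta b α z (v + 1) * (1 - (if v + 1 = α then (b : ℝ) else 1) * z ^ (v + 1)) =
      beta b α z v * (((b : ℝ) - 1) * z ^ (v + 1)) := by
    rw [beta]; rw [mul_assoc, div_mul_cancel₀ _ h.ne']
  linarith

lemma ft_nonneg {b α : ℕ} (hb : 2 ≤ b) (hα : 2 ≤ α) {z : ℝ} (hz0 : 0 < z) (hz1 : z < 1)
    (hbz : (b : ℝ) * z ^ α < 1) (v k : ℕ) : 0 ≤ ft b α z v k := by
  unfold ft; split_ifs <;> positivity

lemma ht_nonneg {b α : ℕ} (hb : 2 ≤ b) (hα : 2 ≤ α) {z : ℝ} (hz0 : 0 < z) (hz1 : z < 1)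
    (hbz : (b : ℝ) * z ^ α < 1) (v k : ℕ) : 0 ≤ ht b α z v k := by
  unfold ht; split_ifs <;> positivity

lemma divmod {b : ℕ} (hb : 2 ≤ b) {k c : ℕ} (hc : c < b) : (b * k + c) / b = k ∧ (b * k + c) % b = c := by
  constructor
  · rw [Nat.mul_add_div (by omega), Nat.div_eq_of_lt hc, add_zero]
  · rw [Nat.mul_add_mod, Nat.mod_eq_of_lt hc]

lemma ft_step {b α : ℕ} (hb : 2 ≤ b) (hα : 2 ≤ α) {z : ℝ} (hz0 : 0 < z) (hz1 : z < 1)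
    (hbz : (b : ℝ) * z ^ α < 1) (v k c : ℕ) (hv : v + 1 ≤ α) (hc : c < b) : ft b α z (v + 1) (b * k + c) =
    z ^ (v + 1) * (if c = 0 then ft b α z (v + 1) k else
      (ft b α z v k + if v + 1 = α then ft b α z (v + 1) k else 0)) := by
  obtain ⟨h1, h2⟩ := divmod hb (k := k) hc
  have h3 := mu_eq hb α (b * k + c)
  have h4 := cnt_eq hb (b * k + c)
  rw [h1] at h3 h4
  rw [h2] at h4
  unfold ft
  rw [h3]
  by_cases hc0 : c = 0
  · simp only [hc0, ne_eq, not_true_eq_false, if_false, add_zero] at h4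
    subst hc0
    simp only [add_zero, if_true] at h4 ⊢
    rw [h4]
    split_ifs with h
    · rw [h]; ring
    · ring
  · rw [if_pos hc0] at h4
    rw [if_neg hc0, h4]
    by_cases hva : v + 1 = α
    · rw [if_pos hva]
      split_ifs with g1 g2 g3 g2 g3
      any_goals omega
      · rw [g1]; ring
      · rw [g1]; ring
      · ring
    · rw [if_neg hva]
      split_ifs with g1 g2 g2
      any_goals omega
      · rw [g1]; ring
      · ring

lemma F_bound {b α : ℕ} (hb : 2 ≤ b) (hα : 2 ≤ α) {z : ℝ} (hz0 : 0 < z) (hz1 : z < 1)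
    (hbz : (b : ℝ) * z ^ α < 1) (L v : ℕ) (hv : v ≤ α) :
    ∑ k ∈ Finset.range (b ^ L), ft b α z v k ≤ beta b α z v := by
  induction L generalizing v with
  | zero =>
    simp only [pow_zero, Finset.sum_range_one, ft, cnt_zero, mu_zero]
    split_ifs with h
    · have : v = 0 := by omega
      subst this; simp [beta]
    · exact beta_nonneg hb hα hz0 hz1 hbz v
  | succ L ih =>
    cases v with
    | zero =>
      rw [Finset.sum_eq_single 0]
      · simp [ft, cnt_zero, mu_zero, beta]
      · intro k _ hk
        have := cnt_pos hb k hk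
        rw [ft, if_neg]; omega
      · intro h
        exfalso; apply h
        rw [Finset.mem_range]; positivity
    | succ v =>
      rw [pow_succ', sum_range_mul']
      have key : ∀ k, ∑ c ∈ Finset.range b, ft b α z (v + 1) (b * k + c) =
          z ^ (v + 1) * ((if v + 1 = α then (b : ℝ) else 1) * ft b α z (v + 1) k +
            ((b : ℝ) - 1) * ft b α z v k) := by
        intro k
        rw [Finset.sum_congr rfl (fun c hc => ft_step hb hα hz0 hz1 hbz v k c hv (Finset.mem_range.1 hc)),
          ← Finset.mul_sum]
        congr 1
        obtain ⟨d, rfl⟩ : ∃ d, b = d + 1 := ⟨b - 1, by omega⟩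
        rw [Finset.sum_range_succ']
        simp only [Nat.add_eq_zero_iff, one_ne_zero, and_false, if_false, if_true, Finset.sum_const,
          Finset.card_range, nsmul_eq_mul]
        push_cast
        split_ifs <;> ring
      simp_rw [key]
      rw [← Finset.mul_sum, Finset.sum_add_distrib, ← Finset.mul_sum, ← Finset.mul_sum,
        beta_rec hb hα hz0 hz1 hbz v]
      have h1 := ih (v + 1) hv
      have h2 := ih v (by omega)
      have hb' : (2:ℝ) ≤ b := by exact_mod_cast hb
      have : 0 ≤ ((b:ℝ) - 1) := by linarith
      gcongr

lemma ht_step {b α : ℕ} (hb : 2 ≤ b) (hα : 2 ≤ α) {z : ℝ} (hz0 : 0 < z) (hz1 : z < 1)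
    (hbz : (b : ℝ) * z ^ α < 1) (v k : ℕ) (hv : v + 1 ≤ α) : ∑ c ∈ Finset.range b, ht b α z (v + 1) (b * k + c) ≤
    z ^ (v + 1) * ((if v + 1 = α then ft b α z (v + 1) k else ht b α z (v + 1) k) + ft b α z v k) := by
  classical
  set X := (if v + 1 = α then ft b α z (v + 1) k else ht b α z (v + 1) k) + ft b α z v k with hX
  have hX0 : 0 ≤ X := by
    have h1 := ft_nonneg hb hα hz0 hz1 hbz v k
    have h2 := ft_nonneg hb hα hz0 hz1 hbz (v+1) k
    have h3 := ht_nonneg hb hα hz0 hz1 hbz (v+1) k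
    rw [hX]; split_ifs <;> linarith
  have hterm : ∀ c ∈ Finset.range b, ht b α z (v + 1) (b * k + c) ≤
      if b ∣ c + ds b k then z ^ (v + 1) * X else 0 := by
    intro c hc
    rw [Finset.mem_range] at hc
    obtain ⟨h1, h2⟩ := divmod hb (k := k) hc
    have h5 := ds_eq hb (b * k + c)
    rw [h1, h2] at h5
    by_cases hd : b ∣ c + ds b k
    · rw [if_pos hd]
      have e : ht b α z (v + 1) (b * k + c) = ft b α z (v + 1) (b * k + c) := by
        simp [ht, ft, h5, hd]
      rw [e, ft_step hb hα hz0 hz1 hbz v k c hv hc]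
      have g1 := ft_nonneg hb hα hz0 hz1 hbz v k
      gcongr
      rw [hX]
      by_cases hc0 : c = 0
      · rw [if_pos hc0]
        subst hc0
        rw [zero_add] at hd
        have : ht b α z (v+1) k = ft b α z (v+1) k := by simp [ht, ft, hd]
        rw [this]; split_ifs <;> linarith
      · rw [if_neg hc0]
        have h3 := ht_nonneg hb hα hz0 hz1 hbz (v+1) k
        split_ifs <;> linarith
    · rw [if_neg hd, ht, if_neg]
      rw [h5]; tauto
  refine (Finset.sum_le_sum hterm).trans ?_
  rw [← Finset.sum_filter, Finset.sum_const, nsmul_eq_mul]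
  have hcard : (Finset.filter (fun c => b ∣ c + ds b k) (Finset.range b)).card ≤ 1 := by
    rw [Finset.card_le_one]
    intro c hc d hd
    simp only [Finset.mem_filter, Finset.mem_range] at hc hd
    have h : c + ds b k ≡ d + ds b k [MOD b] := by
      rw [Nat.ModEq, Nat.mod_eq_zero_of_dvd hc.2, Nat.mod_eq_zero_of_dvd hd.2]
    have := Nat.ModEq.add_right_cancel' _ h
    rwa [Nat.ModEq, Nat.mod_eq_of_lt hc.1, Nat.mod_eq_of_lt hd.1] at this
  have : ((Finset.filter (fun c => b ∣ c + ds b k) (Finset.range b)).card : ℝ) ≤ 1 := by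
    exact_mod_cast hcard
  have h0 : 0 ≤ z ^ (v + 1) * X := by positivity
  nlinarith

lemma H_bound {b α : ℕ} (hb : 2 ≤ b) (hα : 2 ≤ α) {z : ℝ} (hz0 : 0 < z) (hz1 : z < 1)
    (hbz : (b : ℝ) * z ^ α < 1) (L v : ℕ) (hv : v + 1 ≤ α) :
    ∑ k ∈ Finset.range (b ^ L), ht b α z (v + 1) k ≤ beta b α z (v + 1) / ((b : ℝ) - 1) := by
  have hb' : (2:ℝ) ≤ b := by exact_mod_cast hb
  have hb1 : 0 < ((b:ℝ) - 1) := by linarith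
  have hB := beta_nonneg hb hα hz0 hz1 hbz (v + 1)
  have hzp : 0 < z ^ (v+1) := by positivity
  induction L with
  | zero =>
    simp only [pow_zero, Finset.sum_range_one, ht, cnt_zero, mu_zero]
    rw [if_neg (by omega)]
    positivity
  | succ L ih =>
    rw [pow_succ', sum_range_mul']
    refine (Finset.sum_le_sum fun k _ => ht_step hb hα hz0 hz1 hbz v k hv).trans ?_
    rw [← Finset.mul_sum, Finset.sum_add_distrib]
    have h2 := F_bound hb hα hz0 hz1 hbz L v (by omega)
    have h3 := F_bound hb hα hz0 hz1 hbz L (v + 1) hv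
    rw [beta_rec hb hα hz0 hz1 hbz v, mul_div_assoc]
    refine mul_le_mul_of_nonneg_left ?_ hzp.le
    rw [add_div, mul_div_cancel_left₀ _ hb1.ne']
    refine add_le_add ?_ h2
    split_ifs
    · refine h3.trans ?_
      rw [le_div_iff₀ hb1]; nlinarith
    · rw [one_mul]; exact ih


lemma lam_pos {b α : ℕ} (hb : 2 ≤ b) (hα : 2 ≤ α) {lam : ℝ} (hl : 1 / (α : ℝ) < lam) : 0 < lam := lt_of_le_of_lt (by positivity) hl

lemma z_facts {b α : ℕ} (hb : 2 ≤ b) (hα : 2 ≤ α) {lam : ℝ} (hl : 1 / (α : ℝ) < lam) : 0 < (b : ℝ) ^ (-lam) ∧ (b : ℝ) ^ (-lam) < 1 ∧ (b : ℝ) * ((b : ℝ) ^ (-lam)) ^ α < 1 := by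
  have hb' : (2:ℝ) ≤ b := by exact_mod_cast hb
  have h0 : (0:ℝ) < b := by linarith
  have hα' : (0:ℝ) < α := by positivity
  have hl0 := lam_pos hb hα hl
  refine ⟨by positivity, Real.rpow_lt_one_of_one_lt_of_neg (by linarith) (by linarith), ?_⟩
  rw [← Real.rpow_natCast, ← Real.rpow_mul h0.le]
  nth_rewrite 1 [← Real.rpow_one (b:ℝ)]
  rw [← Real.rpow_add h0]
  apply Real.rpow_lt_one_of_one_lt_of_neg (by linarith)
  rw [div_lt_iff₀ hα'] at hl
  linarith

lemma z_pow {b α : ℕ} (hb : 2 ≤ b) (hα : 2 ≤ α) {lam : ℝ} (hl : 1 / (α : ℝ) < lam) (v : ℕ) : ((b : ℝ) ^ (-lam)) ^ v = ((b : ℝ) ^ (lam * v))⁻¹ := by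
  have h0 : (0:ℝ) ≤ b := by positivity
  rw [← Real.rpow_natCast, ← Real.rpow_mul h0, ← Real.rpow_neg h0]
  congr 1; ring

lemma beta_lt {b α : ℕ} (hb : 2 ≤ b) (hα : 2 ≤ α) {lam : ℝ} (hl : 1 / (α : ℝ) < lam) (v : ℕ) (hv : v < α) : beta b α ((b : ℝ) ^ (-lam)) v =
    ∏ i ∈ Finset.Icc 1 v, ((b : ℝ) - 1) / ((b : ℝ) ^ (lam * i) - 1) := by
  obtain ⟨hz0, hz1, hbz⟩ := z_facts hb hα hl
  induction v with
  | zero => simp [beta]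
  | succ v ih =>
    have hd := den_pos hb hα hz0 hz1 hbz v
    rw [beta, ih (by omega), Finset.prod_Icc_succ_top (by omega)]
    rw [if_neg (by omega), one_mul, z_pow hb hα hl] at hd ⊢
    congr 1
    have hy : 0 < (b:ℝ) ^ (lam * ((v + 1 : ℕ):ℝ)) := Real.rpow_pos_of_pos (by positivity) _
    have h1 : (b:ℝ) ^ (lam * ((v + 1 : ℕ):ℝ)) - 1 ≠ 0 := by
      intro h
      have : (b:ℝ) ^ (lam * ((v + 1 : ℕ):ℝ)) = 1 := by linarith
      rw [this] at hd; simp at hd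
    generalize (b:ℝ) ^ (lam * ((v + 1 : ℕ):ℝ)) = y at *
    field_simp

lemma beta_top {b α : ℕ} (hb : 2 ≤ b) (hα : 2 ≤ α) {lam : ℝ} (hl : 1 / (α : ℝ) < lam) : beta b α ((b : ℝ) ^ (-lam)) α = ((b : ℝ) - 1) / ((b : ℝ) ^ (lam * α) - b) *
    ∏ i ∈ Finset.Icc 1 (α - 1), ((b : ℝ) - 1) / ((b : ℝ) ^ (lam * i) - 1) := by
  obtain ⟨hz0, hz1, hbz⟩ := z_facts hb hα hl
  obtain ⟨a, rfl⟩ : ∃ a, α = a + 1 := ⟨α - 1, by omega⟩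
  have hd := den_pos hb hα hz0 hz1 hbz a
  rw [beta, beta_lt hb hα hl a (by omega), Nat.add_sub_cancel, mul_comm]
  rw [if_pos rfl, z_pow hb hα hl] at hd ⊢
  congr 1
  have hy : 0 < (b:ℝ) ^ (lam * ((a + 1 : ℕ):ℝ)) := Real.rpow_pos_of_pos (by positivity) _
  have h1 : (b:ℝ) ^ (lam * ((a + 1 : ℕ):ℝ)) - b ≠ 0 := by
    intro h
    have : (b:ℝ) ^ (lam * ((a + 1 : ℕ):ℝ)) = b := by linarith
    rw [this, mul_inv_cancel₀ (by positivity)] at hd; simp at hd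
  generalize (b:ℝ) ^ (lam * ((a + 1 : ℕ):ℝ)) = y at *
  field_simp

lemma A1_eq {b α : ℕ} (hb : 2 ≤ b) (hα : 2 ≤ α) {lam : ℝ} (hl : 1 / (α : ℝ) < lam) : A1 b α lam = (b : ℝ) / ((b : ℝ) - 1) *
    ∑ v ∈ Finset.Icc 1 α, beta b α ((b : ℝ) ^ (-lam)) v := by
  obtain ⟨a, rfl⟩ : ∃ a, α = a + 1 := ⟨α - 1, by omega⟩
  rw [Finset.sum_Icc_succ_top (by omega), beta_top hb hα hl, A1, Nat.add_sub_cancel]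
  congr 1
  congr 1
  · refine Finset.sum_congr rfl fun v hv => ?_
    rw [Finset.mem_Icc] at hv
    rw [beta_lt hb hα hl v (by omega)]
  · rw [Finset.prod_Icc_succ_top (by omega), mul_comm (∏ i ∈ _, _), ← mul_assoc]
    congr 1
    have h1 : 1 < (b:ℝ) ^ (lam * ((a + 1 : ℕ):ℝ)) :=
      Real.one_lt_rpow (by exact_mod_cast (by omega : 1 < b)) (mul_pos (lam_pos hb hα hl) (by positivity))
    have h2 : (b:ℝ) ^ (lam * ((a + 1 : ℕ):ℝ)) - 1 ≠ 0 := by linarith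
    rw [div_mul_div_comm, mul_comm, mul_div_mul_right _ _ h2]

lemma A2_eq {b α : ℕ} (hb : 2 ≤ b) (hα : 2 ≤ α) {lam : ℝ} (hl : 1 / (α : ℝ) < lam) : A2 b α lam = ∑ v ∈ Finset.Icc 2 α,
    (((b : ℝ) ^ (-lam)) ^ v)⁻¹ * (beta b α ((b : ℝ) ^ (-lam)) v / ((b : ℝ) - 1)) := by
  have hb' : (2:ℝ) ≤ b := by exact_mod_cast hb
  have hb1 : ((b:ℝ) - 1) ≠ 0 := by linarith
  obtain ⟨a, rfl⟩ : ∃ a, α = a + 1 := ⟨α - 1, by omega⟩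
  have hz : ∀ v : ℕ, (((b : ℝ) ^ (-lam)) ^ v)⁻¹ = ((b:ℝ) ^ lam) ^ v := by
    intro v
    rw [Real.rpow_neg (by positivity), inv_pow, inv_inv]
  have hp : ∀ v : ℕ, ∏ i ∈ Finset.Icc 1 v, ((b : ℝ) ^ lam * ((b : ℝ) - 1)) / ((b : ℝ) ^ (lam * i) - 1)
      = ((b:ℝ) ^ lam) ^ v * ∏ i ∈ Finset.Icc 1 v, ((b : ℝ) - 1) / ((b : ℝ) ^ (lam * i) - 1) := by
    intro v
    simp_rw [mul_div_assoc]
    rw [Finset.prod_mul_distrib, Finset.prod_const, Nat.card_Icc, Nat.add_sub_cancel]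
  rw [Finset.sum_Icc_succ_top (by omega), beta_top hb hα hl, A2, Nat.add_sub_cancel]
  congr 1
  · rw [Finset.mul_sum]
    refine Finset.sum_congr rfl fun v hv => ?_
    rw [Finset.mem_Icc] at hv
    rw [beta_lt hb hα hl v (by omega), hp, hz]
    ring
  · rw [hp, hz, pow_succ]
    rw [mul_div_right_comm, div_div, mul_comm (_ - _) ((b:ℝ) - 1), ← div_div, div_self hb1]
    ring

lemma A_nonneg {b α : ℕ} (hb : 2 ≤ b) (hα : 2 ≤ α) {lam : ℝ} (hl : 1 / (α : ℝ) < lam) : 0 ≤ A1 b α lam ∧ 0 ≤ A2 b α lam := by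
  obtain ⟨hz0, hz1, hbz⟩ := z_facts hb hα hl
  have hB := beta_nonneg hb hα hz0 hz1 hbz
  have hb' : (2:ℝ) ≤ b := by exact_mod_cast hb
  have hb1 : 0 ≤ ((b:ℝ) - 1) := by linarith
  rw [A1_eq hb hα hl, A2_eq hb hα hl]
  constructor
  · exact mul_nonneg (by positivity) (Finset.sum_nonneg fun v _ => hB v)
  · exact Finset.sum_nonneg fun v _ => mul_nonneg (by positivity) (div_nonneg (hB v) hb1)

lemma tsum_le_aux {b α : ℕ} (hb : 2 ≤ b) (hα : 2 ≤ α) {lam : ℝ} (hl : 1 / (α : ℝ) < lam) {g : ℕ → ℝ} (hg : ∀ l, 0 ≤ g l) {C : ℝ}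
    (h : ∀ L, ∑ l ∈ Finset.range (b ^ L), g l ≤ C) :
    ∑' l, ENNReal.ofReal (g l) ≤ ENNReal.ofReal C := by
  apply ENNReal.tsum_le_of_sum_range_le
  intro N
  rw [← ENNReal.ofReal_sum_of_nonneg (fun i _ => hg i)]
  apply ENNReal.ofReal_le_ofReal
  refine le_trans (Finset.sum_le_sum_of_subset_of_nonneg ?_ (fun i _ _ => hg i)) (h N)
  exact Finset.range_subset_range.2 (Nat.lt_pow_self hb).le

open Classical in
lemma S_bound {b α : ℕ} (hb : 2 ≤ b) (hα : 2 ≤ α) {lam : ℝ} (hl : 1 / (α : ℝ) < lam) : ∑' k : ℕ, (if k ∈ Eset b then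
      ENNReal.ofReal (((b : ℝ) ^ (-lam)) ^ mualpha b α (k / b)) else 0) ≤
    ENNReal.ofReal (A1 b α lam) := by
  obtain ⟨hz0, hz1, hbz⟩ := z_facts hb hα hl
  set z := (b : ℝ) ^ (-lam) with hz
  have hb' : (2:ℝ) ≤ b := by exact_mod_cast hb
  have hb1 : 0 < ((b:ℝ) - 1) := by linarith
  have hB := beta_nonneg hb hα hz0 hz1 hbz
  have e1 : ∑' k : ℕ, (if k ∈ Eset b then ENNReal.ofReal (z ^ mualpha b α (k / b)) else 0) =
      ∑' k : Eset b, ENNReal.ofReal (if (k.1 / b) ≠ 0 then z ^ mualpha b α (k.1 / b) else 0) := by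
    rw [tsum_subtype (Eset b)
      (fun k => ENNReal.ofReal (if (k / b) ≠ 0 then z ^ mualpha b α (k / b) else 0))]
    refine tsum_congr fun k => ?_
    rw [Set.indicator_apply]
    by_cases h : k ∈ Eset b
    · rw [if_pos h, if_pos h, if_pos]
      intro h0
      obtain ⟨h1, h2⟩ := h
      change b ∣ ds b k at h2
      rw [ds_eq hb, h0, ds_zero, add_zero] at h2
      have := Nat.eq_zero_of_dvd_of_lt h2 (Nat.mod_lt _ (by omega))
      have h3 := Nat.div_add_mod k b
      rw [h0, this] at h3; simp at h3; omega
    · rw [if_neg h, if_neg h]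
  rw [e1]
  have hinj : Function.Injective (fun k : Eset b => k.1 / b) := by
    rintro ⟨k, hk1, hk⟩ ⟨l, hl1, hl⟩ h
    change b ∣ ds b k at hk
    change b ∣ ds b l at hl
    simp only at h
    rw [ds_eq hb] at hk hl
    rw [h] at hk
    have h' : k % b + ds b (l / b) ≡ l % b + ds b (l/b) [MOD b] := by
      rw [Nat.ModEq, Nat.mod_eq_zero_of_dvd hk, Nat.mod_eq_zero_of_dvd hl]
    have := Nat.ModEq.add_right_cancel' _ h'
    rw [Nat.ModEq, Nat.mod_mod, Nat.mod_mod] at this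
    apply Subtype.ext
    change k = l
    rw [← Nat.div_add_mod k b, h, this, Nat.div_add_mod]
  refine (ENNReal.tsum_comp_le_tsum_of_injective hinj
    (fun l => ENNReal.ofReal (if l ≠ 0 then z ^ mualpha b α l else 0))).trans ?_
  apply tsum_le_aux hb hα hl
  · intro l; split_ifs <;> positivity
  intro L
  rw [A1_eq hb hα hl]
  have : ∑ l ∈ Finset.range (b ^ L), (if l ≠ 0 then z ^ mualpha b α l else 0) ≤
      ∑ v ∈ Finset.Icc 1 α, beta b α z v := by
    calc _ ≤ ∑ l ∈ Finset.range (b ^ L), ∑ v ∈ Finset.Icc 1 α, ft b α z v l := by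
          refine Finset.sum_le_sum fun l _ => ?_
          split_ifs with h
          · have hc := cnt_pos hb l h
            refine le_trans ?_ (Finset.single_le_sum (fun v _ => ft_nonneg hb hα hz0 hz1 hbz v l)
              (Finset.mem_Icc.2 (⟨by omega, by omega⟩ : 1 ≤ min (cnt b l) α ∧ min (cnt b l) α ≤ α)))
            simp [ft]
          · exact Finset.sum_nonneg fun v _ => ft_nonneg hb hα hz0 hz1 hbz v l
      _ = ∑ v ∈ Finset.Icc 1 α, ∑ l ∈ Finset.range (b ^ L), ft b α z v l := Finset.sum_comm
      _ ≤ _ := Finset.sum_le_sum fun v hv =>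
          F_bound hb hα hz0 hz1 hbz L v (Finset.mem_Icc.1 hv).2
  refine this.trans ?_
  have h1 : 1 ≤ (b : ℝ) / ((b : ℝ) - 1) := by rw [le_div_iff₀ hb1]; linarith
  have h2 : 0 ≤ ∑ v ∈ Finset.Icc 1 α, beta b α z v := Finset.sum_nonneg fun v _ => hB v
  nlinarith

lemma trunc_zero_dvd {b α : ℕ} (hb : 2 ≤ b) (hα : 2 ≤ α) {lam : ℝ} (hl : 1 / (α : ℝ) < lam) (n k : ℕ) (h : trunc b n k = 0) : b ^ n ∣ k := by
  have hd : ∀ i < n, digit b k i = 0 := by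
    intro i hi
    have := congrArg (fun q => Polynomial.coeff q i) h
    simp only [trunc, Polynomial.finsetSum_coeff, Polynomial.coeff_C_mul, Polynomial.coeff_X_pow,
      Polynomial.coeff_zero, mul_ite, mul_one, mul_zero, Finset.sum_ite_eq, Finset.mem_range, hi,
      if_true] at this
    rw [ZMod.natCast_eq_zero_iff] at this
    exact Nat.eq_zero_of_dvd_of_lt this (Nat.mod_lt _ (by omega))
  clear h
  induction n with
  | zero => simp
  | succ n ih =>
    obtain ⟨l, rfl⟩ := ih (fun i hi => hd i (by omega))
    have := hd n (by omega)
    rw [digit, Nat.mul_div_cancel_left _ (by positivity)] at this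
    rw [pow_succ]
    exact Nat.mul_dvd_mul_left _ (Nat.dvd_of_mod_eq_zero this)

open Classical in
lemma Z_bound {b α : ℕ} (hb : 2 ≤ b) (hα : 2 ≤ α) {lam : ℝ} (hl : 1 / (α : ℝ) < lam) (n : ℕ) (hn : 0 < n) : ∑' k : ℕ, (if k ∈ Eset b ∧ trunc b n k = 0 then
      ENNReal.ofReal (((b : ℝ) ^ (-lam)) ^ mualpha b α (k / b)) else 0) ≤
    ENNReal.ofReal (((b : ℝ) ^ (-lam)) ^ (2 * n) * A2 b α lam) := by
  obtain ⟨hz0, hz1, hbz⟩ := z_facts hb hα hl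
  rw [A2_eq hb hα hl]
  set z := (b : ℝ) ^ (-lam) with hz
  have hb' : (2:ℝ) ≤ b := by exact_mod_cast hb
  have hb1 : 0 < ((b:ℝ) - 1) := by linarith
  have hB := beta_nonneg hb hα hz0 hz1 hbz
  set T : Set ℕ := {k | k ∈ Eset b ∧ trunc b n k = 0} with hT
  set g : ℕ → ℝ := fun l => if l ≠ 0 ∧ b ∣ ds b l then
    z ^ (mualpha b α l + (n - 1) * min (cnt b l) α) else 0 with hg
  have hTl : ∀ k ∈ T, ∃ l, k = b ^ n * l ∧ k / b ^ n = l ∧ ENNReal.ofReal (z ^ mualpha b α (k / b)) =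
      ENNReal.ofReal (g l) := by
    rintro k ⟨⟨hk1, hk2⟩, hk3⟩
    obtain ⟨l, rfl⟩ := trunc_zero_dvd hb hα hl n k hk3
    refine ⟨l, rfl, Nat.mul_div_cancel_left _ (by positivity), ?_⟩
    have e : b ^ n * l / b = b ^ (n - 1) * l := by
      obtain ⟨r, rfl⟩ : ∃ r, n = r + 1 := ⟨n - 1, by omega⟩
      rw [pow_succ', mul_assoc, Nat.mul_div_cancel_left _ (by omega), Nat.add_sub_cancel]
    change b ∣ ds b _ at hk2
    rw [(shift hb α l n).2.1] at hk2
    rw [e, (shift hb α l (n-1)).1, hg]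
    simp only
    rw [if_pos]
    exact ⟨fun h => hk1 (by rw [h, mul_zero]), hk2⟩
  have e1 : ∑' k : ℕ, (if k ∈ Eset b ∧ trunc b n k = 0 then ENNReal.ofReal (z ^ mualpha b α (k / b)) else 0) =
      ∑' k : T, ENNReal.ofReal (g (k.1 / b ^ n)) := by
    rw [tsum_subtype T (fun k => ENNReal.ofReal (g (k / b ^ n)))]
    refine tsum_congr fun k => ?_
    rw [Set.indicator_apply]
    by_cases h : k ∈ T
    · obtain ⟨l, h1, h2, h3⟩ := hTl k h
      rw [if_pos (show k ∈ Eset b ∧ trunc b n k = 0 from h), if_pos h, h2, h3]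
    · rw [if_neg (show ¬ (k ∈ Eset b ∧ trunc b n k = 0) from h), if_neg h]
  rw [e1]
  have hinj : Function.Injective (fun k : T => k.1 / b ^ n) := by
    rintro ⟨k, hk⟩ ⟨l, hl⟩ h
    obtain ⟨k', h1, h2, h3⟩ := hTl k hk
    obtain ⟨l', g1, g2, g3⟩ := hTl l hl
    simp only at h
    rw [h2, g2] at h
    apply Subtype.ext
    change k = l
    rw [h1, g1, h]
  refine (ENNReal.tsum_comp_le_tsum_of_injective hinj
    (fun l => ENNReal.ofReal (g l))).trans ?_
  apply tsum_le_aux hb hα hl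
  · intro l; simp only [hg]; split_ifs <;> positivity
  intro L
  calc _ ≤ ∑ l ∈ Finset.range (b ^ L), ∑ v ∈ Finset.Icc 2 α, z ^ ((n - 1) * v) * ht b α z v l := by
        refine Finset.sum_le_sum fun l _ => ?_
        have hnn : ∀ v ∈ Finset.Icc 2 α, 0 ≤ z ^ ((n - 1) * v) * ht b α z v l := fun v _ =>
          mul_nonneg (by positivity) (ht_nonneg hb hα hz0 hz1 hbz v l)
        simp only [hg]
        split_ifs with h
        · have hc := cnt_two hb l h.1 h.2
          refine le_trans ?_ (Finset.single_le_sum hnn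
            (Finset.mem_Icc.2 (⟨by omega, by omega⟩ : 2 ≤ min (cnt b l) α ∧ min (cnt b l) α ≤ α)))
          simp [ht, h.2, pow_add, mul_comm]
        · exact Finset.sum_nonneg hnn
    _ = ∑ v ∈ Finset.Icc 2 α, z ^ ((n - 1) * v) * ∑ l ∈ Finset.range (b ^ L), ht b α z v l := by
        rw [Finset.sum_comm]
        simp_rw [Finset.mul_sum]
    _ ≤ ∑ v ∈ Finset.Icc 2 α, z ^ (2 * n) * ((z ^ v)⁻¹ * (beta b α z v / ((b : ℝ) - 1))) := by
        refine Finset.sum_le_sum fun v hv => ?_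
        rw [Finset.mem_Icc] at hv
        obtain ⟨u, rfl⟩ : ∃ u, v = u + 1 := ⟨v - 1, by omega⟩
        have h1 := H_bound hb hα hz0 hz1 hbz L u hv.2
        rw [← mul_assoc]
        have h2 : z ^ ((n - 1) * (u + 1)) ≤ z ^ (2 * n) * (z ^ (u + 1))⁻¹ := by
          rw [le_mul_inv_iff₀ (by positivity), ← pow_add]
          apply pow_le_pow_of_le_one hz0.le hz1.le
          obtain ⟨r, rfl⟩ : ∃ r, n = r + 1 := ⟨n - 1, by omega⟩
          rw [Nat.add_sub_cancel]
          nlinarith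
        exact mul_le_mul h2 h1 (Finset.sum_nonneg fun l _ => ht_nonneg hb hα hz0 hz1 hbz _ l)
          (by positivity)
    _ = _ := by rw [Finset.mul_sum]


lemma trunc_degree (b n k : ℕ) : (trunc b n k).degree < (n : WithBot ℕ) := by
  rw [← Polynomial.mem_degreeLT]
  unfold trunc
  refine Submodule.sum_mem _ fun i hi => ?_
  rw [Polynomial.mem_degreeLT]
  refine (Polynomial.degree_C_mul_X_pow_le _ _).trans_lt ?_
  exact_mod_cast Finset.mem_range.1 hi

lemma trunc_zero (b n : ℕ) : trunc b n 0 = 0 := by simp [trunc, digit]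

section
variable {b : ℕ} [Fact b.Prime]

/-- all polynomials of degree `< n`. -/
noncomputable def pol (b n : ℕ) [Fact b.Prime] (a : Fin n → ZMod b) : Polynomial (ZMod b) :=
  ((Polynomial.degreeLTEquiv (ZMod b) n).symm a).1

lemma pol_degree (n : ℕ) (a : Fin n → ZMod b) : (pol b n a).degree < (n : WithBot ℕ) :=
  Polynomial.mem_degreeLT.1 ((Polynomial.degreeLTEquiv (ZMod b) n).symm a).2

lemma pol_inj (n : ℕ) : Function.Injective (pol b n) := by
  intro a c h
  exact (Polynomial.degreeLTEquiv (ZMod b) n).symm.injective (Subtype.ext h)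

open Classical in
lemma count_le (n m : ℕ) (p : Polynomial (ZMod b)) (hp : Irreducible p)
    (hpdeg : p.degree = (n : WithBot ℕ)) (t r : Polynomial (ZMod b)) (ht : t ≠ 0)
    (htd : t.degree < (n : WithBot ℕ)) :
    (Finset.univ.filter fun a : Fin n → ZMod b =>
      ((r + t * pol b n a) % p).degree < ((n - m : ℕ) : WithBot ℕ)).card ≤ b ^ (n - m) := by
  have hcard : Fintype.card (Fin (n - m) → ZMod b) = b ^ (n - m) := by
    simp [ZMod.card]
  rw [← hcard, ← Finset.card_univ]
  refine Finset.card_le_card_of_injOn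
    (fun a => if h : ((r + t * pol b n a) % p).degree < ((n - m : ℕ) : WithBot ℕ) then
      Polynomial.degreeLTEquiv (ZMod b) (n - m) ⟨_, Polynomial.mem_degreeLT.2 h⟩ else 0)
    (fun _ _ => Finset.mem_coe.2 (Finset.mem_univ _)) ?_
  intro a ha c hc h
  simp only [Finset.coe_filter, Finset.mem_univ, true_and, Set.mem_ofPred_eq] at ha hc
  simp only [dif_pos ha, dif_pos hc] at h
  have h2 := congrArg Subtype.val ((Polynomial.degreeLTEquiv (ZMod b) (n - m)).injective h)
  simp only at h2
  have h3 : p ∣ t * (pol b n a - pol b n c) := by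
    have e : t * (pol b n a - pol b n c) = (r + t * pol b n a) - (r + t * pol b n c) := by ring
    rw [e]
    have h4 := EuclideanDomain.div_add_mod (r + t * pol b n a) p
    have h5 := EuclideanDomain.div_add_mod (r + t * pol b n c) p
    rw [← h4, ← h5, h2, add_sub_add_right_eq_sub, ← mul_sub]
    exact dvd_mul_right _ _
  rcases hp.prime.dvd_or_dvd h3 with h4 | h4
  · exact absurd (Polynomial.eq_zero_of_dvd_of_degree_lt h4 (by rwa [hpdeg])) ht
  · have := Polynomial.eq_zero_of_dvd_of_degree_lt h4 (by
      rw [hpdeg]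
      exact (Polynomial.degree_sub_le _ _).trans_lt (max_lt (pol_degree n a) (pol_degree n c)))
    exact pol_inj n (sub_eq_zero.1 this)
end

open Classical in
lemma tsum_pi_le (u : Finset ℕ) (g : ℕ → ℕ → ENNReal) :
    ∑' f : ℕ → ℕ, (if ∀ j ∉ u, f j = 0 then ∏ j ∈ u, g j (f j) else 0) ≤
      ∏ j ∈ u, ∑' k, g j k := by
  induction u using Finset.induction_on with
  | empty =>
    rw [tsum_eq_single (fun _ => 0)]
    · simp
    · intro f hf
      rw [if_neg]
      intro h
      exact hf (funext fun j => h j (by simp))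
  | insert a u ha ih =>
    rw [Finset.prod_insert ha]
    refine le_trans ?_ (mul_le_mul_right ih _)
    rw [← ENNReal.tsum_mul_right]
    simp_rw [← ENNReal.tsum_mul_left]
    rw [← ENNReal.tsum_prod (f := fun (k : ℕ) (f : ℕ → ℕ) => g a k * if ∀ j ∉ u, f j = 0 then ∏ j ∈ u, g j (f j) else 0)]
    have hinj : Function.Injective (fun f : ℕ → ℕ => (f a, Function.update f a 0)) := by
      intro f f' h
      simp only [Prod.mk.injEq] at h
      funext j
      by_cases hj : j = a
      · rw [hj, h.1]
      · have := congrFun h.2 j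
        simpa [hj] using this
    refine le_trans (ENNReal.tsum_le_tsum fun f => ?_)
      (ENNReal.tsum_comp_le_tsum_of_injective hinj _)
    simp only
    split_ifs with h1 h2
    · rw [Finset.prod_insert ha]
      refine le_of_eq ?_
      congr 1
      refine Finset.prod_congr rfl fun j hj => ?_
      rw [Function.update_of_ne]
      rintro rfl; exact ha hj
    · exfalso
      apply h2
      intro j hj
      by_cases hja : j = a
      · subst hja; simp
      · rw [Function.update_of_ne hja]
        exact h1 j (by simp [hja, hj])
    · exact zero_le
    · exact zero_le

lemma sum_rpow_le {ι : Type*} (s : Finset ι) (f : ι → ENNReal) {l : ℝ} (h0 : 0 < l) (h1 : l ≤ 1) :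
    (∑ i ∈ s, f i) ^ l ≤ ∑ i ∈ s, f i ^ l := by
  classical
  induction s using Finset.induction_on with
  | empty => simp [h0]
  | insert a s ha ih =>
    rw [Finset.sum_insert ha, Finset.sum_insert ha]
    exact (ENNReal.rpow_add_le_add_rpow _ _ h0.le h1).trans (add_le_add le_rfl ih)

lemma tsum_rpow_le {ι : Type*} (f : ι → ENNReal) {l : ℝ} (h0 : 0 < l) (h1 : l ≤ 1) :
    (∑' i, f i) ^ l ≤ ∑' i, f i ^ l := by
  have : ∑' i, f i ≤ (∑' i, f i ^ l) ^ (l⁻¹) := by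
    rw [ENNReal.tsum_eq_iSup_sum]
    refine iSup_le fun s => ?_
    rw [ENNReal.le_rpow_inv_iff h0]
    exact (sum_rpow_le s f h0 h1).trans (ENNReal.sum_le_tsum s)
  rwa [ENNReal.le_rpow_inv_iff h0] at this

noncomputable def wt (b α k : ℕ) : ENNReal := ENNReal.ofReal (((b : ℝ) ^ mualpha b α (k / b))⁻¹)

def adm (b m n : ℕ) [Fact b.Prime] (p : Polynomial (ZMod b)) (τ : ℕ) (q : ℕ → Polynomial (ZMod b))
    (u : Finset ℕ) (f : ℕ → ℕ) : Prop :=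
  (∀ j ∈ u, f j ∈ Eset b) ∧ (∀ j ∉ u, f j = 0) ∧
    ((∑ j ∈ Finset.range τ, trunc b n (f j) * q j) % p).degree < ((n - m : ℕ) : WithBot ℕ)

open Classical in
noncomputable def TE (b α m n : ℕ) [Fact b.Prime] (p : Polynomial (ZMod b)) (τ : ℕ)
    (q : ℕ → Polynomial (ZMod b)) (u : Finset ℕ) : ENNReal :=
  ∑' f : ℕ → ℕ, if adm b m n p τ q u f then ∏ j ∈ u, wt b α (f j) else 0

noncomputable def cw (γ : ℕ → ℝ) (D : ℝ) (j : ℕ) : ENNReal := ENNReal.ofReal (√(γ j) * √D)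

noncomputable def BE (b α m n : ℕ) [Fact b.Prime] (γ : ℕ → ℝ) (D : ℝ) (p : Polynomial (ZMod b)) (τ : ℕ)
    (q : ℕ → Polynomial (ZMod b)) : ENNReal :=
  ∑ u ∈ (Finset.range τ).powerset.filter (fun u => u.Nonempty),
    (∏ j ∈ u, cw γ D j) * TE b α m n p τ q u

noncomputable def Th (b α m n : ℕ) [Fact b.Prime] (γ : ℕ → ℝ) (D : ℝ) (p : Polynomial (ZMod b)) (τ : ℕ)
    (q : ℕ → Polynomial (ZMod b)) : ENNReal :=
  ∑ v ∈ (Finset.range τ).powerset,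
    (∏ j ∈ insert τ v, cw γ D j) * TE b α m n p (τ + 1) q (insert τ v)

section
variable {b α m n : ℕ} [Fact b.Prime]

lemma wt_rpow {lam : ℝ} (hl0 : 0 < lam) (k : ℕ) :
    wt b α k ^ lam = ENNReal.ofReal (((b : ℝ) ^ (-lam)) ^ mualpha b α (k / b)) := by
  have hb0 : (0:ℝ) < b := by exact_mod_cast (Fact.out : b.Prime).pos
  rw [wt, ENNReal.ofReal_rpow_of_nonneg (by positivity) hl0.le]
  congr 1
  rw [Real.inv_rpow (by positivity), ← Real.rpow_natCast, ← Real.rpow_natCast, ← Real.rpow_mul hb0.le,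
    ← Real.rpow_mul hb0.le, ← Real.rpow_neg hb0.le]
  congr 1; ring

open Classical in
lemma S_wt (hα : 2 ≤ α) {lam : ℝ} (hl : 1 / (α : ℝ) < lam) :
    ∑' k : ℕ, (if k ∈ Eset b then wt b α k ^ lam else 0) ≤ ENNReal.ofReal (A1 b α lam) := by
  have hb : 2 ≤ b := (Fact.out : b.Prime).two_le
  simp_rw [wt_rpow (lam_pos hb hα hl)]
  exact S_bound hb hα hl

lemma one_lam (hα : 2 ≤ α) : 1 / (α : ℝ) < 1 := by
  have : (2:ℝ) ≤ α := by exact_mod_cast hα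
  rw [div_lt_one (by linarith)]; linarith

lemma TE_ne_top (hα : 2 ≤ α) (p : Polynomial (ZMod b)) (τ : ℕ) (q : ℕ → Polynomial (ZMod b))
    (u : Finset ℕ) : TE b α m n p τ q u ≠ ⊤ := by
  classical
  have h : TE b α m n p τ q u ≤ ∏ j ∈ u, ∑' k, (if k ∈ Eset b then wt b α k ^ (1:ℝ) else 0) := by
    refine le_trans (ENNReal.tsum_le_tsum fun f => ?_) (tsum_pi_le u _)
    split_ifs with h1 h2 h2
    · refine le_of_eq (Finset.prod_congr rfl fun j hj => ?_)
      rw [if_pos (h1.1 j hj), ENNReal.rpow_one]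
    · exact absurd h1.2.1 h2
    · exact zero_le
    · exact zero_le
  refine ne_top_of_le_ne_top ?_ h
  refine ENNReal.prod_ne_top fun j _ => ?_
  exact ne_top_of_le_ne_top ENNReal.ofReal_ne_top (S_wt hα (one_lam hα))

lemma BE_term_ne_top (hα : 2 ≤ α) (γ : ℕ → ℝ) (D : ℝ) (p : Polynomial (ZMod b)) (τ : ℕ)
    (q : ℕ → Polynomial (ZMod b)) (u : Finset ℕ) :
    (∏ j ∈ u, cw γ D j) * TE b α m n p τ q u ≠ ⊤ :=
  ENNReal.mul_ne_top (ENNReal.prod_ne_top fun _ _ => ENNReal.ofReal_ne_top) (TE_ne_top hα p τ q u)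

lemma BE_ne_top (hα : 2 ≤ α) (γ : ℕ → ℝ) (D : ℝ) (p : Polynomial (ZMod b)) (τ : ℕ)
    (q : ℕ → Polynomial (ZMod b)) : BE b α m n γ D p τ q ≠ ⊤ :=
  ENNReal.sum_ne_top.2 fun u _ => BE_term_ne_top hα γ D p τ q u

lemma Bcrit_eq (hα : 2 ≤ α) (γ : ℕ → ℝ) (hγ : ∀ j, 0 ≤ γ j) (D : ℝ) (p : Polynomial (ZMod b)) (τ : ℕ)
    (q : ℕ → Polynomial (ZMod b)) :
    Bcrit b α m n γ D p τ q = (BE b α m n γ D p τ q).toReal := by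
  classical
  rw [BE, ENNReal.toReal_sum fun u _ => BE_term_ne_top hα γ D p τ q u, Bcrit]
  refine Finset.sum_congr rfl fun u _ => ?_
  rw [ENNReal.toReal_mul, ENNReal.toReal_prod]
  congr 1
  · simp only [cw]
    rw [Finset.prod_congr rfl fun j _ => ENNReal.toReal_ofReal (by positivity),
      Finset.prod_mul_distrib, Finset.prod_const, Real.sqrt_prod _ (fun j _ => hγ j)]
  · rw [TE, ENNReal.tsum_toReal_eq]
    · refine Eq.trans (tsum_subtype {f : ℕ → ℕ | adm b m n p τ q u f}
        (fun f => ((b : ℝ) ^ ∑ j ∈ u, mualpha b α (f j / b))⁻¹)) ?_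
      refine tsum_congr fun f => ?_
      rw [Set.indicator_apply]
      by_cases h : adm b m n p τ q u f
      · rw [if_pos h, if_pos (show f ∈ {f : ℕ → ℕ | adm b m n p τ q u f} from h), ENNReal.toReal_prod,
          ← Finset.prod_pow_eq_pow_sum, ← Finset.prod_inv_distrib]
        refine Finset.prod_congr rfl fun j _ => ?_
        rw [wt, ENNReal.toReal_ofReal (by positivity)]
      · rw [if_neg h, if_neg (show f ∉ {f : ℕ → ℕ | adm b m n p τ q u f} from h)]; rfl
    · intro f
      split_ifs
      · exact ENNReal.prod_ne_top fun _ _ => ENNReal.ofReal_ne_top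
      · simp

lemma TE_succ (p : Polynomial (ZMod b)) (τ : ℕ) (q : ℕ → Polynomial (ZMod b)) (u : Finset ℕ)
    (hu : u ⊆ Finset.range τ) : TE b α m n p (τ + 1) q u = TE b α m n p τ q u := by
  classical
  refine tsum_congr fun f => ?_
  have : adm b m n p (τ + 1) q u f ↔ adm b m n p τ q u f := by
    unfold adm
    refine and_congr_right fun _ => and_congr_right fun h => ?_
    have h0 : f τ = 0 := h τ fun hτ => by simpa using hu hτ
    rw [Finset.sum_range_succ, h0, trunc_zero, zero_mul, add_zero]
  simp only [this]

lemma TE_congr (p : Polynomial (ZMod b)) (τ : ℕ) (q q' : ℕ → Polynomial (ZMod b)) (u : Finset ℕ)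
    (h : ∀ j < τ, q j = q' j) : TE b α m n p τ q u = TE b α m n p τ q' u := by
  classical
  refine tsum_congr fun f => ?_
  have : adm b m n p τ q u f ↔ adm b m n p τ q' u f := by
    unfold adm
    rw [Finset.sum_congr rfl fun j hj => by rw [h j (Finset.mem_range.1 hj)]]
  simp only [this]

lemma BE_congr (γ : ℕ → ℝ) (D : ℝ) (p : Polynomial (ZMod b)) (τ : ℕ)
    (q q' : ℕ → Polynomial (ZMod b)) (h : ∀ j < τ, q j = q' j) :
    BE b α m n γ D p τ q = BE b α m n γ D p τ q' :=
  Finset.sum_congr rfl fun u _ => by rw [TE_congr p τ q q' u h]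

lemma BE_split (γ : ℕ → ℝ) (D : ℝ) (p : Polynomial (ZMod b)) (τ : ℕ)
    (q : ℕ → Polynomial (ZMod b)) :
    BE b α m n γ D p (τ + 1) q = BE b α m n γ D p τ q + Th b α m n γ D p τ q := by
  classical
  rw [BE, Finset.sum_filter, Finset.range_add_one, Finset.sum_powerset_insert (by simp), BE,
    Finset.sum_filter, Th]
  congr 1
  · refine Finset.sum_congr rfl fun u hu => ?_
    rw [TE_succ p τ q u (Finset.mem_powerset.1 hu)]
  · refine Finset.sum_congr rfl fun u hu => ?_
    rw [if_pos (Finset.insert_nonempty _ _)]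

open Classical in
lemma Th_rpow {lam : ℝ} (h0 : 0 < lam) (h1 : lam ≤ 1) (γ : ℕ → ℝ) (D : ℝ) (p : Polynomial (ZMod b)) (τ : ℕ)
    (q : ℕ → Polynomial (ZMod b)) :
    Th b α m n γ D p τ q ^ lam ≤ ∑ v ∈ (Finset.range τ).powerset,
      (∏ j ∈ insert τ v, cw γ D j ^ lam) *
        ∑' f : ℕ → ℕ, if adm b m n p (τ + 1) q (insert τ v) f then
          ∏ j ∈ insert τ v, wt b α (f j) ^ lam else 0 := by
  refine (sum_rpow_le _ _ h0 h1).trans (Finset.sum_le_sum fun v _ => ?_)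
  rw [ENNReal.mul_rpow_of_nonneg _ _ h0.le, ← ENNReal.prod_rpow_of_nonneg h0.le]
  refine mul_le_mul_right ((tsum_rpow_le _ h0 h1).trans (ENNReal.tsum_le_tsum fun f => ?_)) _
  split_ifs
  · rw [← ENNReal.prod_rpow_of_nonneg h0.le]
  · simp [h0]

open Classical in
/-- the number of admissible `q'` is at most `cnt n`. -/
noncomputable def NN (b m n k : ℕ) : ENNReal := if trunc b n k = 0 then (b : ENNReal) ^ n else (b : ENNReal) ^ (n - m)

open Classical in
lemma count_sum {lam : ℝ} (p : Polynomial (ZMod b)) (hp : Irreducible p)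
    (hpdeg : p.degree = (n : WithBot ℕ)) (τ : ℕ) (q : ℕ → Polynomial (ZMod b)) (v : Finset ℕ)
    (hv : v ⊆ Finset.range τ) (f : ℕ → ℕ) :
    ∑ a : Fin n → ZMod b, (if adm b m n p (τ + 1) (Function.update q τ (pol b n a)) (insert τ v) f then
          ∏ j ∈ insert τ v, wt b α (f j) ^ lam else 0) ≤
    if ∀ j ∉ insert τ v, f j = 0 then ∏ j ∈ insert τ v, (if f j ∈ Eset b then
      wt b α (f j) ^ lam * (if j = τ then NN b m n (f j) else 1) else 0) else 0 := by
  by_cases hs : ∀ j ∉ insert τ v, f j = 0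
  swap
  · rw [Finset.sum_eq_zero]
    · exact zero_le
    · intro a _
      rw [if_neg]
      exact fun h => hs h.2.1
  by_cases hE : ∀ j ∈ insert τ v, f j ∈ Eset b
  swap
  · rw [Finset.sum_eq_zero]
    · exact zero_le
    · intro a _
      rw [if_neg]
      exact fun h => hE h.1
  rw [if_pos hs, ← Finset.sum_filter, Finset.sum_const, nsmul_eq_mul,
    Finset.prod_congr rfl (fun j hj => if_pos (hE j hj)), Finset.prod_mul_distrib,
    Finset.prod_ite_eq' (insert τ v) τ, if_pos (Finset.mem_insert_self _ _), mul_comm]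
  refine mul_le_mul_right ?_ _
  unfold NN
  split_ifs with ht
  · have : Fintype.card (Fin n → ZMod b) = b ^ n := by simp [ZMod.card]
    rw [← Nat.cast_pow, ← this]
    exact_mod_cast Finset.card_le_univ _
  · have := count_le n m p hp hpdeg (trunc b n (f τ))
      (∑ j ∈ Finset.range τ, trunc b n (f j) * q j) ht (trunc_degree b n _)
    rw [← Nat.cast_pow]
    refine Nat.cast_le.2 (le_trans (Finset.card_le_card ?_) this)
    intro a ha
    simp only [Finset.mem_filter, Finset.mem_univ, true_and] at ha ⊢
    have h3 := ha.2.2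
    rw [Finset.sum_range_succ, Function.update_self] at h3
    rwa [Finset.sum_congr rfl fun j hj => by
      rw [Function.update_of_ne (Finset.mem_range.1 hj).ne]] at h3

open Classical in
lemma N_sum (hα : 2 ≤ α) {lam : ℝ} (hl : 1 / (α : ℝ) < lam) (hm : 0 < m) (hmn : m ≤ n) :
    ∑' k, (if k ∈ Eset b then wt b α k ^ lam * NN b m n k else 0) ≤
      (b : ENNReal) ^ n * (ENNReal.ofReal (((b : ℝ) ^ (-(min ((m : ℝ) / lam) (2 * n)))) ^ lam) *
        ENNReal.ofReal (A1 b α lam + A2 b α lam)) := by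
  have hb : 2 ≤ b := (Fact.out : b.Prime).two_le
  have hb0 : (0:ℝ) < b := by exact_mod_cast (Fact.out : b.Prime).pos
  have hb1 : (1:ℝ) ≤ b := by exact_mod_cast (Fact.out : b.Prime).pos
  have hl0 := lam_pos hb hα hl
  obtain ⟨hA1, hA2⟩ := A_nonneg hb hα hl
  set K : ℝ := ((b : ℝ) ^ (-(min ((m : ℝ) / lam) (2 * n)))) ^ lam with hK
  have hKe : K = (b:ℝ) ^ (-(min ((m : ℝ) / lam) (2 * n)) * lam) := by
    rw [hK, ← Real.rpow_mul hb0.le]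
  have hK1 : (b:ℝ) ^ (n - m) ≤ b ^ n * K := by
    rw [hKe, ← Real.rpow_natCast, ← Real.rpow_natCast, ← Real.rpow_add hb0]
    apply Real.rpow_le_rpow_of_exponent_le hb1
    rw [Nat.cast_sub hmn]
    have : min ((m : ℝ) / lam) (2 * n) * lam ≤ m := by
      rw [← le_div_iff₀ hl0]; exact min_le_left _ _
    linarith
  have hK2 : ((b:ℝ) ^ (-lam)) ^ (2 * n) ≤ K := by
    rw [hKe, ← Real.rpow_natCast, ← Real.rpow_mul hb0.le]
    apply Real.rpow_le_rpow_of_exponent_le hb1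
    push_cast
    have : min ((m : ℝ) / lam) (2 * n) * lam ≤ 2 * n * lam :=
      mul_le_mul_of_nonneg_right (min_le_right _ _) hl0.le
    linarith
  have hK0 : 0 ≤ K := by rw [hKe]; positivity
  have h1 := S_wt (b := b) hα hl
  have h2 := Z_bound hb hα hl n (by omega)
  calc _ ≤ ∑' k, ((b : ENNReal) ^ (n - m) * (if k ∈ Eset b then wt b α k ^ lam else 0) +
        (b : ENNReal) ^ n * (if k ∈ Eset b ∧ trunc b n k = 0 then
          ENNReal.ofReal (((b : ℝ) ^ (-lam)) ^ mualpha b α (k / b)) else 0)) := by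
        refine ENNReal.tsum_le_tsum fun k => ?_
        rw [← wt_rpow hl0, NN]
        by_cases h : k ∈ Eset b
        · by_cases ht : trunc b n k = 0
          · simp only [h, ht, and_self, if_true]
            rw [mul_comm]; exact le_add_self
          · simp only [h, ht, and_false, if_true, if_false, mul_zero, add_zero]
            rw [mul_comm]
        · simp [h]
    _ ≤ (b : ENNReal) ^ (n - m) * ENNReal.ofReal (A1 b α lam) + (b : ENNReal) ^ n *
          ENNReal.ofReal (((b : ℝ) ^ (-lam)) ^ (2 * n) * A2 b α lam) := by
        rw [ENNReal.tsum_add, ENNReal.tsum_mul_left, ENNReal.tsum_mul_left]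
        gcongr
    _ ≤ _ := by
        have e : ∀ r : ℕ, (b : ENNReal) ^ r = ENNReal.ofReal ((b:ℝ) ^ r) := by
          intro r; rw [ENNReal.ofReal_pow hb0.le, ENNReal.ofReal_natCast]
        rw [e, e, ← ENNReal.ofReal_mul (by positivity), ← ENNReal.ofReal_mul (by positivity),
          ← ENNReal.ofReal_add (by positivity) (by positivity), ← ENNReal.ofReal_mul hK0,
          ← ENNReal.ofReal_mul (by positivity)]
        apply ENNReal.ofReal_le_ofReal
        have g1 := mul_le_mul_of_nonneg_right hK1 hA1
        have g2 := mul_le_mul_of_nonneg_left (mul_le_mul_of_nonneg_right hK2 hA2)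
          (by positivity : 0 ≤ (b:ℝ) ^ n)
        nlinarith

lemma Th_bound (hα : 2 ≤ α) {lam : ℝ} (hl : 1 / (α : ℝ) < lam) (hl1 : lam ≤ 1)
    (hm : 0 < m) (hmn : m ≤ n) (γ : ℕ → ℝ) (D : ℝ) (p : Polynomial (ZMod b)) (hp : Irreducible p)
    (hpdeg : p.degree = (n : WithBot ℕ)) (τ : ℕ) (q : ℕ → Polynomial (ZMod b))
    (hq : ∀ q' : Polynomial (ZMod b), q'.degree < (n : WithBot ℕ) →
      Th b α m n γ D p τ q ≤ Th b α m n γ D p τ (Function.update q τ q')) :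
    Th b α m n γ D p τ q ^ lam ≤
      ENNReal.ofReal (((b : ℝ) ^ (-(min ((m : ℝ) / lam) (2 * n)))) ^ lam) *
      ((cw γ D τ ^ lam * ENNReal.ofReal (A1 b α lam + A2 b α lam)) *
        ∏ j ∈ Finset.range τ, (1 + cw γ D j ^ lam * ENNReal.ofReal (A1 b α lam + A2 b α lam))) := by
  classical
  have hb : 2 ≤ b := (Fact.out : b.Prime).two_le
  have hl0 := lam_pos hb hα hl
  obtain ⟨hA1, hA2⟩ := A_nonneg hb hα hl
  set K := ENNReal.ofReal (((b : ℝ) ^ (-(min ((m : ℝ) / lam) (2 * n)))) ^ lam)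
  set A := ENNReal.ofReal (A1 b α lam + A2 b α lam) with hA
  have hA1A : ENNReal.ofReal (A1 b α lam) ≤ A := ENNReal.ofReal_le_ofReal (by linarith)
  have hcard : ∑ _a : Fin n → ZMod b, Th b α m n γ D p τ q ^ lam =
      (b : ENNReal) ^ n * Th b α m n γ D p τ q ^ lam := by
    rw [Finset.sum_const, nsmul_eq_mul, Finset.card_univ]
    simp [ZMod.card]
  have hb0 : (b : ENNReal) ^ n ≠ 0 := pow_ne_zero _ (by exact_mod_cast (by omega : b ≠ 0))
  have hbt : (b : ENNReal) ^ n ≠ ⊤ := ENNReal.pow_ne_top (ENNReal.natCast_ne_top b)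
  rw [← ENNReal.mul_le_mul_iff_right hb0 hbt, ← hcard]
  calc _ ≤ ∑ a : Fin n → ZMod b, ∑ v ∈ (Finset.range τ).powerset,
          (∏ j ∈ insert τ v, cw γ D j ^ lam) *
          ∑' f : ℕ → ℕ, if adm b m n p (τ + 1) (Function.update q τ (pol b n a)) (insert τ v) f then
            ∏ j ∈ insert τ v, wt b α (f j) ^ lam else 0 := by
        refine Finset.sum_le_sum fun a _ => ?_
        exact (ENNReal.rpow_le_rpow (hq _ (pol_degree n a)) hl0.le).trans (Th_rpow hl0 hl1 γ D p τ _)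
    _ = ∑ v ∈ (Finset.range τ).powerset, (∏ j ∈ insert τ v, cw γ D j ^ lam) *
          ∑' f : ℕ → ℕ, ∑ a : Fin n → ZMod b,
            if adm b m n p (τ + 1) (Function.update q τ (pol b n a)) (insert τ v) f then
            ∏ j ∈ insert τ v, wt b α (f j) ^ lam else 0 := by
        rw [Finset.sum_comm]
        refine Finset.sum_congr rfl fun v _ => ?_
        rw [← Finset.mul_sum]
        congr 1
        rw [Summable.tsum_finsetSum (fun _ _ => ENNReal.summable)]
    _ ≤ ∑ v ∈ (Finset.range τ).powerset, (∏ j ∈ insert τ v, cw γ D j ^ lam) *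
          (((b : ENNReal) ^ n * (K * A)) * A ^ v.card) := by
        refine Finset.sum_le_sum fun v hv => mul_le_mul_right ?_ _
        rw [Finset.mem_powerset] at hv
        have hτ : τ ∉ v := fun h => by simpa using hv h
        refine (ENNReal.tsum_le_tsum fun f => count_sum p hp hpdeg τ q v hv f).trans ?_
        refine (tsum_pi_le (insert τ v) (fun j k => if k ∈ Eset b then
          wt b α k ^ lam * (if j = τ then NN b m n k else 1) else 0)).trans ?_
        rw [Finset.prod_insert hτ]
        refine mul_le_mul' ?_ ?_
        · simp only [if_true]
          exact N_sum hα hl hm hmn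
        · rw [← Finset.prod_const]
          refine Finset.prod_le_prod' fun j hj => ?_
          have : j ≠ τ := fun h => hτ (h ▸ hj)
          simp only [this, if_false, mul_one]
          exact (S_wt hα hl).trans hA1A
    _ = _ := by
        rw [Finset.prod_one_add, Finset.mul_sum, Finset.mul_sum, Finset.mul_sum]
        refine Finset.sum_congr rfl fun v hv => ?_
        rw [Finset.mem_powerset] at hv
        have hτ : τ ∉ v := fun h => by simpa using hv h
        rw [Finset.prod_insert hτ, Finset.prod_mul_distrib, Finset.prod_const]
        ring

end

/-- Component-by-component construction of folded higher order polynomial lattice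
rules: the CBC algorithm yields, for every `1 ≤ τ ≤ s` and every `1/α < λ ≤ 1`, the
bound `B_α(q_τ, p) ≤ b^{-min(m/λ, 2n)} [-1 + ∏_{j=1}^τ (1 + γ_j^{λ/2} D^{λ/2} A_{α,b,λ})]^{1/λ}`. -/
theorem cbc_bound (b α m n s : ℕ) [Fact b.Prime] (hα : 2 ≤ α) (hm : 0 < m) (hmn : m ≤ n)
    (hs : 0 < s) (p : Polynomial (ZMod b)) (hp : Irreducible p)
    (hpdeg : p.degree = (n : WithBot ℕ))
    (γ : ℕ → ℝ) (hγ : ∀ j, 0 ≤ γ j) (D : ℝ) (hD : 0 < D)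
    (q : ℕ → Polynomial (ZMod b))
    (hq : ∀ τ, 1 ≤ τ → τ ≤ s → (q (τ - 1)).degree < (n : WithBot ℕ) ∧
      ∀ q' : Polynomial (ZMod b), q'.degree < (n : WithBot ℕ) →
        Bcrit b α m n γ D p τ q ≤ Bcrit b α m n γ D p τ (Function.update q (τ - 1) q')) :
    ∀ τ, 1 ≤ τ → τ ≤ s → ∀ lam : ℝ, 1 / (α : ℝ) < lam → lam ≤ 1 →
      Bcrit b α m n γ D p τ q ≤
        (b : ℝ) ^ (-(min ((m : ℝ) / lam) (2 * n))) *
          (-1 + ∏ j ∈ Finset.range τ,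
            (1 + γ j ^ (lam / 2) * D ^ (lam / 2) * (A1 b α lam + A2 b α lam))) ^ (1 / lam) := by
  have hb0 : (0:ℝ) < b := by exact_mod_cast (Fact.out : b.Prime).pos
  have hb : 2 ≤ b := (Fact.out : b.Prime).two_le
  intro τ _ hτ lam hl hl1
  have hl0 := lam_pos hb hα hl
  obtain ⟨hA1, hA2⟩ := A_nonneg hb hα hl
  set B0 : ℝ := (b : ℝ) ^ (-(min ((m : ℝ) / lam) (2 * n))) with hB0
  have hB0p : 0 ≤ B0 := by rw [hB0]; positivity
  have main : ∀ t ≤ s, BE b α m n γ D p t q ^ lam + ENNReal.ofReal (B0 ^ lam) ≤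
      ENNReal.ofReal (B0 ^ lam) * ∏ j ∈ Finset.range t,
        (1 + cw γ D j ^ lam * ENNReal.ofReal (A1 b α lam + A2 b α lam)) := by
    intro t
    induction t with
    | zero => intro _; simp [BE, Finset.sum_filter, hl0]
    | succ t ih =>
      intro ht
      have hTh : ∀ q' : Polynomial (ZMod b), q'.degree < (n : WithBot ℕ) →
          Th b α m n γ D p t q ≤ Th b α m n γ D p t (Function.update q t q') := by
        intro q' hq'
        have h := (hq (t + 1) (by omega) ht).2 q' hq'
        rw [Bcrit_eq hα γ hγ, Bcrit_eq hα γ hγ, Nat.add_sub_cancel,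
          ENNReal.toReal_le_toReal (BE_ne_top hα _ _ _ _ _) (BE_ne_top hα _ _ _ _ _),
          BE_split, BE_split, BE_congr γ D p t (Function.update q t q') q
            (fun j hj => Function.update_of_ne hj.ne _ _)] at h
        exact (ENNReal.add_le_add_iff_left (BE_ne_top hα _ _ _ _ _)).1 h
      have h1 := Th_bound hα hl hl1 hm hmn γ D p hp hpdeg t q hTh
      have h2 := ih (by omega)
      rw [BE_split, Finset.prod_range_succ, mul_add, mul_add, mul_one]
      calc _ ≤ (BE b α m n γ D p t q ^ lam + Th b α m n γ D p t q ^ lam) + ENNReal.ofReal (B0 ^ lam) :=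
            add_le_add (ENNReal.rpow_add_le_add_rpow _ _ hl0.le hl1) le_rfl
        _ = (BE b α m n γ D p t q ^ lam + ENNReal.ofReal (B0 ^ lam)) + Th b α m n γ D p t q ^ lam := by ring
        _ ≤ _ := add_le_add h2 (h1.trans (le_of_eq (by ring)))
  have h := main τ hτ
  have hcw : ∀ j, (1 + cw γ D j ^ lam * ENNReal.ofReal (A1 b α lam + A2 b α lam)) =
      ENNReal.ofReal (1 + γ j ^ (lam / 2) * D ^ (lam / 2) * (A1 b α lam + A2 b α lam)) := by
    intro j
    have hg := hγ j
    rw [cw, ENNReal.ofReal_rpow_of_nonneg (by positivity) hl0.le,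
      ← ENNReal.ofReal_mul (by positivity), ENNReal.ofReal_add zero_le_one (by positivity),
      ENNReal.ofReal_one, Real.mul_rpow (by positivity) (by positivity), Real.sqrt_eq_rpow,
      Real.sqrt_eq_rpow, ← Real.rpow_mul hg, ← Real.rpow_mul hD.le]
    have : 1 / 2 * lam = lam / 2 := by ring
    rw [this]
  have hnn : ∀ j, 0 ≤ 1 + γ j ^ (lam / 2) * D ^ (lam / 2) * (A1 b α lam + A2 b α lam) := by
    intro j
    have hg := hγ j
    positivity
  simp_rw [hcw] at h
  rw [← ENNReal.ofReal_prod_of_nonneg (fun j _ => hnn j), ← ENNReal.ofReal_mul (by positivity)] at h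
  set P := ∏ j ∈ Finset.range τ, (1 + γ j ^ (lam / 2) * D ^ (lam / 2) * (A1 b α lam + A2 b α lam)) with hP
  have hP1 : 1 ≤ P := by
    rw [hP]
    refine Finset.prod_induction _ (fun x : ℝ => 1 ≤ x)
      (fun x y hx hy => one_le_mul_of_one_le_of_one_le hx hy) le_rfl ?_
    intro j _
    have hg := hγ j
    have : 0 ≤ γ j ^ (lam / 2) * D ^ (lam / 2) * (A1 b α lam + A2 b α lam) := by positivity
    linarith
  rw [Bcrit_eq hα γ hγ]
  set X := BE b α m n γ D p τ q with hX
  have hXt : X ≠ ⊤ := BE_ne_top hα _ _ _ _ _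
  have h' : X.toReal ^ lam + B0 ^ lam ≤ B0 ^ lam * P := by
    rw [← ENNReal.ofReal_toReal hXt, ENNReal.ofReal_rpow_of_nonneg ENNReal.toReal_nonneg hl0.le,
      ← ENNReal.ofReal_add (by positivity) (by positivity),
      ENNReal.ofReal_le_ofReal_iff (by positivity)] at h
    exact h
  have h2 : X.toReal ^ lam ≤ B0 ^ lam * (-1 + P) := by linarith
  calc X.toReal = (X.toReal ^ lam) ^ (1 / lam) := by
        rw [← Real.rpow_mul ENNReal.toReal_nonneg, mul_one_div_cancel hl0.ne', Real.rpow_one]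
    _ ≤ (B0 ^ lam * (-1 + P)) ^ (1 / lam) :=
        Real.rpow_le_rpow (by positivity) h2 (by positivity)
    _ = _ := by
        rw [Real.mul_rpow (by positivity) (by linarith), ← Real.rpow_mul hB0p,
          mul_one_div_cancel hl0.ne', Real.rpow_one]

end QMC
end
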